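/- arXiv:2306.16487 — 3 statements merged into one kernel-verified Lean document; each statement's English description precedes it below -/
import Mathlib

section
/- Let p be a prime and let ξ_p ∈ ℂ be a primitive p-th root of unity. For m ∈ ℤ let [m]_p ∈ {0,1,…,p−1} denote the residue of m modulo p. Then for every n ∈ ℤ, one has Σ_{j=1}^{p−1} ξ_p^{−nj}/(1 − ξ_p^j) = (p−1)/2 − [n]_p. -/
/-!
Write `T n = ∑_{j=1}^{k-1} ζ^(-nj) / (1 - ζ^j)` for a primitive `k`-th root of unity `ζ`. The terms
of `T n` and `T (n - 1)` at `j` differ by `ζ^(-nj)`, and these powers sum to `-1` over `1 ≤ j < k`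
unless `k ∣ n`. So `T` drops by one at each of the steps from `0` to `k - 1`. Since `T` is
`k`-periodic, it remains to find `T 0`; pairing `j` with `k - j` and using
`1 / (1 - a) + 1 / (1 - a⁻¹) = 1` gives `2 T 0 = k - 1`.
-/

open Finset

theorem zpow_emod_of_pow_eq_one {G₀ : Type*} [GroupWithZero G₀] {a : G₀} {k : ℕ}
    (ha : a ≠ 0) (hk : a ^ k = 1) (n : ℤ) : a ^ (n % k) = a ^ n := by
  conv_rhs => rw [← Int.mul_ediv_add_emod n k, zpow_add₀ ha, zpow_mul, zpow_natCast, hk,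
    one_zpow, one_mul]

theorem sum_Ico_one_pow_eq_neg_one {R : Type*} [Ring R] [NoZeroDivisors R] {a : R} {k : ℕ}
    [NeZero k] (ha : a ≠ 1) (hk : a ^ k = 1) : ∑ j ∈ Ico 1 k, a ^ j = -1 := by
  have hgeom : ∑ j ∈ range k, a ^ j = 0 := by
    refine (mul_eq_zero.mp ?_).resolve_left (sub_ne_zero.mpr ha.symm)
    rw [mul_neg_geom_sum, hk, sub_self]
  rw [sum_range_eq_add_Ico _ (NeZero.pos k), pow_zero] at hgeom
  exact (neg_eq_of_add_eq_zero_right hgeom).symm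

section DivisionRing

variable {K : Type*} [DivisionRing K] {a : K}

theorem inv_one_sub_add_inv_one_sub_inv (h0 : a ≠ 0) (h1 : a ≠ 1) :
    (1 - a)⁻¹ + (1 - a⁻¹)⁻¹ = 1 := by
  have hfactor : 1 - a⁻¹ = -((1 - a) * a⁻¹) := by
    rw [sub_mul, one_mul, mul_inv_cancel₀ h0, neg_sub]
  calc (1 - a)⁻¹ + (1 - a⁻¹)⁻¹
      = (1 - a) * (1 - a)⁻¹ := by
        rw [hfactor, inv_neg, mul_inv_rev, inv_inv, sub_mul, one_mul, ← sub_eq_add_neg]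
    _ = 1 := mul_inv_cancel₀ (sub_ne_zero.mpr h1.symm)

theorem zpow_neg_add_one_div_one_sub (h0 : a ≠ 0) (h1 : a ≠ 1) (n : ℤ) :
    a ^ (-(n + 1)) / (1 - a) = a ^ (-n) / (1 - a) + a ^ (-(n + 1)) := by
  have hpow : a ^ (-n) = a ^ (-(n + 1)) * a := by
    rw [← zpow_add_one₀ h0, neg_add, neg_add_cancel_right]
  rw [hpow, div_add' _ _ _ (sub_ne_zero.mpr h1.symm), ← mul_add, add_sub_cancel, mul_one]

end DivisionRing

section PrimitiveRoot

variable {K : Type*} [Field K] {ζ : K} {k : ℕ}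

theorem two_mul_sum_inv_one_sub_pow [NeZero k] (hζ : IsPrimitiveRoot ζ k) :
    2 * ∑ j ∈ Ico 1 k, (1 - ζ ^ j)⁻¹ = k - 1 := by
  have hreflect : ∑ j ∈ Ico 1 k, (1 - ζ ^ (k - j))⁻¹ = ∑ j ∈ Ico 1 k, (1 - ζ ^ j)⁻¹ := by
    simpa using sum_Ico_reflect (fun j ↦ (1 - ζ ^ j)⁻¹) 1 k.le_succ
  have hpair : ∀ j ∈ Ico 1 k, (1 - ζ ^ j)⁻¹ + (1 - ζ ^ (k - j))⁻¹ = 1 := by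
    intro j hj
    obtain ⟨hj_pos, hj_lt⟩ := mem_Ico.mp hj
    have h0 : ζ ≠ 0 := hζ.ne_zero (NeZero.ne k)
    rw [pow_sub₀ ζ h0 hj_lt.le, hζ.pow_eq_one, one_mul]
    exact inv_one_sub_add_inv_one_sub_inv (pow_ne_zero j h0)
      (hζ.pow_ne_one_of_pos_of_lt (by lia) hj_lt)
  calc 2 * ∑ j ∈ Ico 1 k, (1 - ζ ^ j)⁻¹
      = ∑ j ∈ Ico 1 k, ((1 - ζ ^ j)⁻¹ + (1 - ζ ^ (k - j))⁻¹) := by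
        rw [sum_add_distrib, hreflect, two_mul]
    _ = k - 1 := by
        rw [sum_congr rfl hpair]
        simp [Nat.cast_sub NeZero.one_le]

theorem sum_zpow_neg_mul_eq_neg_one [NeZero k] (hζ : IsPrimitiveRoot ζ k) {n : ℤ}
    (hn : ¬(k : ℤ) ∣ n) : ∑ j ∈ Ico 1 k, ζ ^ (-(n * (j : ℤ))) = -1 := by
  have hne : ζ ^ (-n) ≠ 1 := by rwa [Ne, hζ.zpow_eq_one_iff_dvd, dvd_neg]
  have hpow : (ζ ^ (-n)) ^ k = 1 := by
    rw [← zpow_natCast, zpow_comm, hζ.zpow_eq_one, one_zpow]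
  rw [← sum_Ico_one_pow_eq_neg_one hne hpow]
  refine sum_congr rfl fun j _ ↦ ?_
  rw [← neg_mul, zpow_mul, zpow_natCast]

theorem sum_zpow_div_one_sub_pow_add_one [NeZero k] (hζ : IsPrimitiveRoot ζ k) {n : ℤ}
    (hn : ¬(k : ℤ) ∣ n + 1) :
    ∑ j ∈ Ico 1 k, ζ ^ (-((n + 1) * (j : ℤ))) / (1 - ζ ^ j)
      = ∑ j ∈ Ico 1 k, ζ ^ (-(n * (j : ℤ))) / (1 - ζ ^ j) - 1 := by
  rw [sub_eq_add_neg, ← sum_zpow_neg_mul_eq_neg_one hζ hn, ← sum_add_distrib]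
  refine sum_congr rfl fun j hj ↦ ?_
  obtain ⟨hj_pos, hj_lt⟩ := mem_Ico.mp hj
  have h0 : ζ ^ j ≠ 0 := pow_ne_zero j (hζ.ne_zero (NeZero.ne k))
  have h1 : ζ ^ j ≠ 1 := hζ.pow_ne_one_of_pos_of_lt (by lia) hj_lt
  have hzpow (m : ℤ) : ζ ^ (-(m * (j : ℤ))) = (ζ ^ j) ^ (-m) := by
    rw [← zpow_natCast, ← zpow_mul, mul_neg, mul_comm]
  simpa only [hzpow] using zpow_neg_add_one_div_one_sub h0 h1 n

theorem sum_zpow_div_one_sub_pow_natCast (hζ : IsPrimitiveRoot ζ k) {r : ℕ} (hr : r < k) :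
    ∑ j ∈ Ico 1 k, ζ ^ (-((r : ℤ) * (j : ℤ))) / (1 - ζ ^ j)
      = ∑ j ∈ Ico 1 k, (1 - ζ ^ j)⁻¹ - r := by
  have : NeZero k := ⟨by lia⟩
  induction r with
  | zero => simp
  | succ r ih =>
    have hndvd : ¬(k : ℤ) ∣ r + 1 := by
      exact_mod_cast Nat.not_dvd_of_pos_of_lt r.succ_pos hr
    push_cast
    rw [sum_zpow_div_one_sub_pow_add_one hζ hndvd, ih (by lia)]
    ring

theorem sum_zpow_emod_div_one_sub_pow [NeZero k] (hζ : IsPrimitiveRoot ζ k) (n : ℤ) :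
    ∑ j ∈ Ico 1 k, ζ ^ (-(n % k * (j : ℤ))) / (1 - ζ ^ j)
      = ∑ j ∈ Ico 1 k, ζ ^ (-(n * (j : ℤ))) / (1 - ζ ^ j) := by
  have hmod := zpow_emod_of_pow_eq_one (hζ.ne_zero (NeZero.ne k)) hζ.pow_eq_one n
  simp only [zpow_neg, zpow_mul, hmod]

theorem stmt_3_general [NeZero (2 : K)] [NeZero k] (hζ : IsPrimitiveRoot ζ k) (n : ℤ) :
    ∑ j ∈ Ico 1 k, ζ ^ (-(n * (j : ℤ))) / (1 - ζ ^ j)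
      = ((k : K) - 1) / 2 - ((n % (k : ℤ) : ℤ) : K) := by
  have hk : (0 : ℤ) < k := by exact_mod_cast NeZero.pos k
  obtain ⟨r, hr⟩ := Int.eq_ofNat_of_zero_le (Int.emod_nonneg n hk.ne')
  have hr_lt : r < k := by exact_mod_cast hr ▸ Int.emod_lt_of_pos n hk
  rw [← sum_zpow_emod_div_one_sub_pow hζ, hr, sum_zpow_div_one_sub_pow_natCast hζ hr_lt,
    ← two_mul_sum_inv_one_sub_pow hζ, mul_div_cancel_left₀ _ two_ne_zero, Int.cast_natCast]

end PrimitiveRoot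

/-- Let `p` be a prime and `ξ` a primitive `p`-th root of unity in `ℂ`.
For every `n : ℤ`, `∑_{j=1}^{p-1} ξ^{-nj}/(1 - ξ^j) = (p-1)/2 - [n]_p`,
where `[n]_p ∈ {0,…,p-1}` is the residue of `n` mod `p`. -/
theorem stmt_3 (p : ℕ) (hp : p.Prime) (ξ : ℂ) (hξ : IsPrimitiveRoot ξ p) (n : ℤ) :
    ∑ j ∈ Finset.Ico 1 p, ξ ^ (-(n * (j : ℤ))) / (1 - ξ ^ (j : ℕ))
      = ((p : ℂ) - 1) / 2 - ((n % (p : ℤ) : ℤ) : ℂ) := by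
  have : NeZero p := ⟨hp.ne_zero⟩
  exact stmt_3_general hξ n
end

section
/- Let d ≥ 1 with gcd(d, 2p) = 1 and let f ∈ AS_d^{0,odd}. Then L(1/√q, χ_f)² = 2 · Σ_{F monic, deg F ≤ d−2} d₂(F) χ_f(F) / q^{(deg F)/2} + (1 − q^{−1/2})² · Σ_{F monic, deg F = d−1} d₂(F) χ_f(F) / q^{(deg F)/2} + q^{−d/2} · Σ_{j=0}^{d−2} ( (d−j)(q^{−1/2} − q^{1/2}) − 2 ) · Σ_{F monic, deg F = j} d₂(F) χ_f(F). -/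
open Polynomial
open scoped Classical ComplexConjugate

noncomputable section

namespace AS

variable {Fq : Type} [Field Fq] [Fintype Fq]

/-- `q^x` as a complex number (real power of the positive real `q`). -/
def qp (q : ℕ) (x : ℝ) : ℂ := ((q : ℝ) ^ x : ℝ)

/-- The monic polynomial of degree `j` whose lower-order coefficients are given by `a`,
i.e. `X^j + ∑_{i<j} a_i X^i`; as `a` ranges over `Fin j → Fq` this enumerates the set `M_j`
of monic polynomials of degree `j`. -/
def mpoly (j : ℕ) (a : Fin j → Fq) : Fq[X] :=
  X ^ j + ∑ i : Fin j, C (a i) * X ^ (i : ℕ)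

/-- The polynomial `∑_{j<m} a_j X^j` with coefficient vector `a`. -/
def cpoly {m : ℕ} (a : Fin m → Fq) : Fq[X] :=
  ∑ j : Fin m, C (a j) * X ^ (j : ℕ)

/-- The `k`-th divisor function: the number of `k`-tuples of monic polynomials whose
product is `F`. -/
def dk (k : ℕ) (F : Fq[X]) : ℕ :=
  Nat.card {t : Fin k → Fq[X] // (∀ i, (t i).Monic) ∧ ∏ i, t i = F}

/-- `ψ_f(F) = ψ(tr_{q/p}(∑_{α : F(α)=0} f(α)))`, the sum being over the roots of `F`
in an algebraic closure, counted with multiplicity; this sum equals the trace from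
`𝔽_q[x]/(F)` to `𝔽_q` of (multiplication by) `f(x̄)`. -/
def psif (p : ℕ) [Algebra (ZMod p) Fq] (ψ : AddChar (ZMod p) ℂ) (f F : Fq[X]) : ℂ :=
  ψ (Algebra.trace (ZMod p) Fq
      (Algebra.trace Fq (AdjoinRoot F) (aeval (AdjoinRoot.root F) f)))

/-- The polynomial Artin–Schreier family `AS_d^0`, encoded by coefficient vectors:
`f = ∑_{j≤d} a_j x^j` with `a_d ≠ 0` and `a_j = 0` whenever `j > 0` and `p ∣ j`. -/
def AS0 (p : ℕ) (d : ℕ) : Finset (Fin (d + 1) → Fq) :=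
  Finset.univ.filter fun a =>
    a (Fin.last d) ≠ 0 ∧ ∀ j : Fin (d + 1), 0 < (j : ℕ) → p ∣ (j : ℕ) → a j = 0

/-- The value at `u` of the Artin–Schreier `L`-function
`L(u,f,ψ) = ∑_{j=0}^{d-1} a_j(f,ψ) u^j` with `a_j(f,ψ) = ∑_{F ∈ M_j} ψ_f(F)`. -/
def Lval (p : ℕ) [Algebra (ZMod p) Fq] (ψ : AddChar (ZMod p) ℂ) (d : ℕ)
    (f : Fq[X]) (u : ℂ) : ℂ :=
  ∑ j ∈ Finset.range d, (∑ a : Fin j → Fq, psif p ψ f (mpoly j a)) * u ^ j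


/-- The character value `χ_f(F)`: equal to `ψ_f(F)` if `F(0) ≠ 0` and to `0` otherwise. -/
def chi0 (p : ℕ) {Fq : Type} [Field Fq] [Fintype Fq] [Algebra (ZMod p) Fq]
    (ψ : AddChar (ZMod p) ℂ) (f F : Fq[X]) : ℂ :=
  if F.coeff 0 ≠ 0 then psif p ψ f F else 0

/-- The value at `u` of `L(u, χ_f) = ∑_{j=0}^{d} (∑_{F ∈ M_j} χ_f(F)) u^j`. -/
def Lchi0 (p : ℕ) {Fq : Type} [Field Fq] [Fintype Fq] [Algebra (ZMod p) Fq]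
    (ψ : AddChar (ZMod p) ℂ) (d : ℕ) (f : Fq[X]) (u : ℂ) : ℂ :=
  ∑ j ∈ Finset.range (d + 1), (∑ a : Fin j → Fq, chi0 p ψ f (mpoly j a)) * u ^ j

/-- The odd polynomial Artin–Schreier family `AS_d^{0,odd} = {f ∈ AS_d^0 : f(−x) = −f(x)}`,
encoded by coefficient vectors. -/
def AS0odd (p : ℕ) (d : ℕ) {Fq : Type} [Field Fq] [Fintype Fq] :
    Finset (Fin (d + 1) → Fq) :=
  (AS0 p d).filter fun a => (cpoly a).comp (-X) = -(cpoly a)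


/-! The reverse of a monic `F` is `∏ (1 - α X)` over the roots `α` of `F`, and its logarithmic
derivative generates their power sums. So `χ_f(F)`, for `F(0) ≠ 0`, depends only on the
logarithmic derivative of the reverse of `F` modulo `X ^ d`, through an even primitive character
`χ` modulo `X ^ (d + 1)`. Since `f` is odd, the substitution `X ↦ -X` turns `χ` into `χ⁻¹`; the
Gauss sum argument therefore gives a functional equation relating `S(u) = ∑ χ(F^*) u ^ deg F` to
itself rather than to its conjugate. Now `L(u, χ_f) = (1 - u) S(u)`, so `L²` is `(1 - u)²` times
the polynomial `S²` of degree at most `2 (d - 1)`, whose coefficients are symmetric after scaling.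
At the central point the upper half of `S²` duplicates the lower half, and the latter is expressed
by the coefficients of `L²`, which are the sums of `d₂ χ_f`, by summation by parts. -/

section Jacobi

variable {k R n : Type*} [CommRing k] [CommRing R] [Algebra k R] [Fintype n] [DecidableEq n]

/-- The ring homomorphism `x ↦ x + D x · ε` into the dual numbers attached to a derivation `D`,
through which identities between polynomial expressions can be differentiated. -/
def dualNumberHom (D : Derivation k R R) : R →+* DualNumber R where
  toFun x := TrivSqZeroExt.inl x + TrivSqZeroExt.inr (D x)
  map_one' := by ext <;> simp
  map_zero' := by ext <;> simp
  map_mul' x y := by ext <;> simp [mul_comm]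
  map_add' x y := by ext <;> simp

/-- Jacobi's formula, with `N` in the role of `A⁻¹ * D A`. -/
lemma derivation_det_of_mul_eq (D : Derivation k R R) {A N : Matrix n n R}
    (h : A * N = A.map D) : D A.det = A.det * N.trace := by
  let ι : R →+* DualNumber R := TrivSqZeroExt.inlHom R R
  have hmap : (dualNumberHom D).mapMatrix A =
      ι.mapMatrix A * (1 + (DualNumber.eps : DualNumber R) • ι.mapMatrix N) := by
    rw [mul_add, mul_one, Matrix.mul_smul, ← map_mul, h]
    ext i j <;> simp [dualNumberHom, ι]
  have hdet : dualNumberHom D A.det = ι A.det * (1 + ι N.trace * DualNumber.eps) := by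
    rw [RingHom.map_det, hmap, Matrix.det_mul, Matrix.det_one_add_smul, pow_two,
      DualNumber.eps_mul_eps, mul_zero, add_zero, ← RingHom.map_det, AddMonoidHom.map_trace ι]
    rfl
  simpa [dualNumberHom, ι] using congrArg TrivSqZeroExt.snd hdet

end Jacobi

section TraceSeries

open scoped PowerSeries

variable {R n : Type*} [CommRing R] [Fintype n] [DecidableEq n]

lemma coe_charpolyRev (M : Matrix n n R) :
    (M.charpolyRev : R⟦X⟧) =
      (1 - (PowerSeries.X : R⟦X⟧) • M.map PowerSeries.C).det := by
  rw [Matrix.charpolyRev, ← coeToPowerSeries.ringHom_apply, RingHom.map_det]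
  congr 1
  ext1 i j
  by_cases hij : i = j <;> simp [hij, PowerSeries.X_mul]

lemma one_sub_X_smul_mul_mk_pow (M : Matrix n n R) :
    (1 - (PowerSeries.X : R⟦X⟧) • M.map PowerSeries.C) *
      .of (fun i j ↦ PowerSeries.mk fun k ↦ (M ^ (k + 1)) i j) =
        M.map PowerSeries.C := by
  rw [sub_mul, one_mul, smul_mul_assoc, sub_eq_iff_eq_add]
  ext i j k
  cases k with
  | zero => simp
  | succ k => simp [pow_succ' M (k + 1), Matrix.mul_apply]

lemma derivative_charpolyRev (M : Matrix n n R) :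
    PowerSeries.derivative R (M.charpolyRev : R⟦X⟧) =
      M.charpolyRev * -PowerSeries.mk fun k ↦ (M ^ (k + 1)).trace := by
  have hderiv : (1 - (PowerSeries.X : R⟦X⟧) • M.map PowerSeries.C).map
      (PowerSeries.derivative R) = -M.map PowerSeries.C := by
    ext1 i j
    by_cases hij : i = j <;> simp [hij]
  have hmul := congrArg Neg.neg (one_sub_X_smul_mul_mk_pow M)
  rw [← hderiv, ← mul_neg] at hmul
  rw [coe_charpolyRev, derivation_det_of_mul_eq _ hmul, Matrix.trace_neg]
  congr 2
  ext k
  simp [Matrix.trace]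

lemma derivative_coe_reverse {K : Type*} [Field K] {F : K[X]} (hF : F.Monic) :
    PowerSeries.derivative K (F.reverse : K⟦X⟧) =
      F.reverse * -PowerSeries.mk fun k ↦
        Algebra.trace K (AdjoinRoot F) (AdjoinRoot.root F ^ (k + 1)) := by
  let pb := AdjoinRoot.powerBasis hF.ne_zero
  have hcharpoly := charpoly_leftMulMatrix pb
  rw [AdjoinRoot.minpoly_powerBasis_gen_of_monic hF] at hcharpoly
  have hderiv := derivative_charpolyRev (Algebra.leftMulMatrix pb.basis pb.gen)
  rw [← Matrix.reverse_charpoly, hcharpoly] at hderiv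
  simp only [hderiv, Algebra.trace_eq_matrix_trace pb.basis, map_pow,
    ← AdjoinRoot.powerBasis_gen hF.ne_zero]
  rfl

end TraceSeries

section FormalLogDeriv

open scoped PowerSeries

lemma X_pow_dvd_derivative {R : Type*} [CommSemiring R] {n : ℕ} {g : R⟦X⟧}
    (h : PowerSeries.X ^ (n + 1) ∣ g) : PowerSeries.X ^ n ∣ PowerSeries.derivative R g := by
  rw [PowerSeries.X_pow_dvd_iff] at h ⊢
  intro m hm
  rw [PowerSeries.coeff_derivative, h _ (by lia), zero_mul]

lemma constantCoeff_rescale {R : Type*} [CommSemiring R] (a : R) (g : R⟦X⟧) :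
    PowerSeries.constantCoeff (PowerSeries.rescale a g) = PowerSeries.constantCoeff g := by
  rw [← PowerSeries.coeff_zero_eq_constantCoeff_apply, PowerSeries.coeff_rescale]
  simp

lemma derivative_rescale {R : Type*} [CommSemiring R] (a : R) (g : R⟦X⟧) :
    PowerSeries.derivative R (PowerSeries.rescale a g) =
      PowerSeries.C a * PowerSeries.rescale a (PowerSeries.derivative R g) := by
  ext k
  simp only [PowerSeries.coeff_derivative, PowerSeries.coeff_C_mul, PowerSeries.coeff_rescale]
  ring

variable {K : Type*} [Field K]

/-- The formal logarithmic derivative `g'/g`; the value is junk when `g(0) = 0`. -/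
def formalLogDeriv (g : K⟦X⟧) : K⟦X⟧ := PowerSeries.derivative K g * g⁻¹

lemma formalLogDeriv_C (x : K) : formalLogDeriv (PowerSeries.C x) = 0 := by
  simp [formalLogDeriv]

lemma formalLogDeriv_mul {g h : K⟦X⟧} (hg : PowerSeries.constantCoeff g ≠ 0)
    (hh : PowerSeries.constantCoeff h ≠ 0) :
    formalLogDeriv (g * h) = formalLogDeriv g + formalLogDeriv h := by
  simp only [formalLogDeriv, PowerSeries.mul_inv_rev, Derivation.leibniz, smul_eq_mul]
  linear_combination (PowerSeries.derivative K h * h⁻¹) * PowerSeries.mul_inv_cancel g hg +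
    (PowerSeries.derivative K g * g⁻¹) * PowerSeries.mul_inv_cancel h hh

lemma formalLogDeriv_eq_of_derivative_eq_mul {g t : K⟦X⟧} (hg : PowerSeries.constantCoeff g ≠ 0)
    (h : PowerSeries.derivative K g = g * t) : formalLogDeriv g = t := by
  rw [formalLogDeriv, h, mul_right_comm, PowerSeries.mul_inv_cancel g hg, one_mul]

lemma formalLogDeriv_rescale (a : K) {g : K⟦X⟧} (hg : PowerSeries.constantCoeff g ≠ 0) :
    formalLogDeriv (PowerSeries.rescale a g) =
      PowerSeries.C a * PowerSeries.rescale a (formalLogDeriv g) := by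
  refine formalLogDeriv_eq_of_derivative_eq_mul (by rwa [constantCoeff_rescale]) ?_
  rw [derivative_rescale, mul_left_comm, ← map_mul, formalLogDeriv, mul_left_comm,
    PowerSeries.mul_inv_cancel g hg, mul_one]

end FormalLogDeriv

section EvenPrimitive

open scoped PowerSeries

variable {K L : Type*} [Field K] [MonoidWithZero L] {χ : K⟦X⟧ →*₀ L} {n : ℕ}

/-- A character of `K⟦X⟧` that is an even (trivial on constants) primitive Dirichlet character
modulo `X ^ (n + 1)`. -/
structure IsEvenPrimitive (χ : K⟦X⟧ →*₀ L) (n : ℕ) : Prop where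
  map_eq_zero : ∀ g, PowerSeries.constantCoeff g = 0 → χ g = 0
  map_C : ∀ x : K, x ≠ 0 → χ (PowerSeries.C x) = 1
  map_eq_one : ∀ u, PowerSeries.X ^ (n + 1) ∣ u - 1 → χ u = 1
  exists_map_ne_one : ∃ u, PowerSeries.constantCoeff u = 1 ∧ PowerSeries.X ^ n ∣ u - 1 ∧ χ u ≠ 1

lemma IsEvenPrimitive.map_congr (hχ : IsEvenPrimitive χ n) {g h : K⟦X⟧}
    (hgh : PowerSeries.X ^ (n + 1) ∣ g - h) : χ g = χ h := by
  have hconst : PowerSeries.constantCoeff g = PowerSeries.constantCoeff h := by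
    have := PowerSeries.X_dvd_iff.mp ((dvd_pow_self _ n.succ_ne_zero).trans hgh)
    rwa [map_sub, sub_eq_zero] at this
  by_cases hh : PowerSeries.constantCoeff h = 0
  · rw [hχ.map_eq_zero g (hconst.trans hh), hχ.map_eq_zero h hh]
  have hinv := PowerSeries.mul_inv_cancel h hh
  have hdvd : PowerSeries.X ^ (n + 1) ∣ h⁻¹ * g - 1 := by
    rw [← hinv, mul_comm h, ← mul_sub]
    exact hgh.mul_left _
  rw [← mul_one (χ h), ← hχ.map_eq_one _ hdvd, ← map_mul, ← mul_assoc, hinv, one_mul]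

end EvenPrimitive

section ArtinSchreierCharacter

open scoped PowerSeries

variable {K L : Type*} [Field K] [Field L]

/-- The linear form `t ↦ ∑_k f_{k+1} t_k`. On the logarithmic derivative of `∏ (1 - α X)` it is
`-∑ (f(α) - f(0))`. -/
def coeffPairing (f : K[X]) : K⟦X⟧ →ₗ[K] K :=
  ∑ k ∈ Finset.range f.natDegree, f.coeff (k + 1) • PowerSeries.coeff k

lemma coeffPairing_apply (f : K[X]) (t : K⟦X⟧) :
    coeffPairing f t = ∑ k ∈ Finset.range f.natDegree, f.coeff (k + 1) * PowerSeries.coeff k t := by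
  simp [coeffPairing]

lemma coeffPairing_eq_zero (f : K[X]) {t : K⟦X⟧} (h : PowerSeries.X ^ f.natDegree ∣ t) :
    coeffPairing f t = 0 := by
  rw [coeffPairing_apply]
  refine Finset.sum_eq_zero fun k hk ↦ ?_
  rw [PowerSeries.X_pow_dvd_iff.mp h k (Finset.mem_range.mp hk), mul_zero]

lemma coeffPairing_X_pow_mul {f : K[X]} {m : ℕ} (hf : f.natDegree = m + 1) (t : K⟦X⟧) :
    coeffPairing f (PowerSeries.X ^ m * t) =
      f.leadingCoeff * PowerSeries.constantCoeff t := by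
  rw [coeffPairing_apply, leadingCoeff, hf, Finset.sum_range_succ, Finset.sum_eq_zero, zero_add,
    PowerSeries.coeff_X_pow_mul', if_pos le_rfl, Nat.sub_self,
    PowerSeries.coeff_zero_eq_constantCoeff_apply]
  intro k hk
  rw [PowerSeries.coeff_X_pow_mul', if_neg (by simpa using hk), mul_zero]

lemma neg_one_pow_mul_coeff_of_comp_neg_X {R : Type*} [CommRing R] {f : R[X]}
    (hf : f.comp (-X) = -f) (k : ℕ) : (-1) ^ k * f.coeff k = -f.coeff k := by
  have := comp_C_mul_X_coeff (r := (-1 : R)) (n := k) (p := f)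
  rw [map_neg, C_1, neg_one_mul, hf, coeff_neg] at this
  rw [this, mul_comm]

lemma coeffPairing_rescale_neg_one {f : K[X]} (hf : f.comp (-X) = -f) (t : K⟦X⟧) :
    coeffPairing f (PowerSeries.C (-1) * PowerSeries.rescale (-1) t) = -coeffPairing f t := by
  simp only [coeffPairing_apply, ← Finset.sum_neg_distrib]
  refine Finset.sum_congr rfl fun k _ ↦ ?_
  rw [PowerSeries.coeff_C_mul, PowerSeries.coeff_rescale]
  linear_combination
    PowerSeries.coeff k t * neg_one_pow_mul_coeff_of_comp_neg_X hf (k + 1)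

/-- The character of `K⟦X⟧` whose value at the reverse of a monic `F` is `e (∑ f(α))`, the sum being
over the roots `α` of `F`, when `f(0) = 0`. -/
def asChar (e : AddChar K L) (f : K[X]) : K⟦X⟧ →*₀ L where
  toFun g := if PowerSeries.constantCoeff g = 0 then 0
    else e (-coeffPairing f (formalLogDeriv g))
  map_zero' := by simp
  map_one' := by simp [formalLogDeriv]
  map_mul' g h := by
    by_cases hg : PowerSeries.constantCoeff g = 0
    · simp [hg]
    by_cases hh : PowerSeries.constantCoeff h = 0
    · simp [hh]
    simp only [map_mul, mul_eq_zero, hg, hh, or_self, if_false, formalLogDeriv_mul hg hh, map_add,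
      neg_add, AddChar.map_add_eq_mul]

lemma asChar_of_ne_zero (e : AddChar K L) (f : K[X]) {g : K⟦X⟧}
    (hg : PowerSeries.constantCoeff g ≠ 0) :
    asChar e f g = e (-coeffPairing f (formalLogDeriv g)) :=
  if_neg hg

lemma asChar_of_eq_zero (e : AddChar K L) (f : K[X]) {g : K⟦X⟧}
    (hg : PowerSeries.constantCoeff g = 0) : asChar e f g = 0 :=
  if_pos hg

lemma asChar_rescale_neg_one (e : AddChar K L) {f : K[X]} (hf : f.comp (-X) = -f) (g : K⟦X⟧) :
    asChar e f (PowerSeries.rescale (-1) g) = (asChar e f g)⁻¹ := by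
  by_cases hg : PowerSeries.constantCoeff g = 0
  · rw [asChar_of_eq_zero e f hg, asChar_of_eq_zero e f (by rwa [constantCoeff_rescale]), inv_zero]
  · rw [asChar_of_ne_zero e f hg, asChar_of_ne_zero e f (by rwa [constantCoeff_rescale]),
      formalLogDeriv_rescale _ hg, coeffPairing_rescale_neg_one hf, ← AddChar.map_neg_eq_inv]

lemma exists_asChar_ne_one {e : AddChar K L} (he : e ≠ 1) {f : K[X]}
    (hf : (f.natDegree : K) ≠ 0) :
    ∃ u, PowerSeries.constantCoeff u = 1 ∧ PowerSeries.X ^ f.natDegree ∣ u - 1 ∧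
      asChar e f u ≠ 1 := by
  obtain ⟨x, hx⟩ := AddChar.ne_one_iff.mp he
  obtain ⟨m, hm⟩ := Nat.exists_eq_succ_of_ne_zero fun h : f.natDegree = 0 ↦ hf (by simp [h])
  have hlead : f.leadingCoeff ≠ 0 := by
    rw [leadingCoeff_ne_zero]
    rintro rfl
    simp at hf
  let b := -(x / (f.leadingCoeff * f.natDegree))
  let u : K⟦X⟧ := 1 + PowerSeries.C b * PowerSeries.X ^ f.natDegree
  have hconst : PowerSeries.constantCoeff u = 1 := by simp [u, hm]
  have hlog : formalLogDeriv u =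
      PowerSeries.X ^ m * (PowerSeries.C (b * f.natDegree) * u⁻¹) := by
    have : PowerSeries.derivative K u = PowerSeries.X ^ m * PowerSeries.C (b * f.natDegree) := by
      simp only [u, map_add, Derivation.leibniz, PowerSeries.derivative_pow, smul_eq_mul,
        PowerSeries.derivative_X, PowerSeries.derivative_C, PowerSeries.derivative_one, hm,
        Nat.succ_eq_add_one, Nat.add_sub_cancel, map_mul, map_natCast]
      ring
    rw [formalLogDeriv, this, mul_assoc]
  refine ⟨u, hconst, ⟨PowerSeries.C b, by simp [u, mul_comm]⟩, ?_⟩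
  have hpair : -coeffPairing f (formalLogDeriv u) = x := by
    rw [hlog, coeffPairing_X_pow_mul hm, map_mul, PowerSeries.constantCoeff_C,
      PowerSeries.constantCoeff_inv, hconst]
    simp only [b]
    field_simp
  rwa [asChar_of_ne_zero e f (by simp [hconst]), hpair]

lemma isEvenPrimitive_asChar {e : AddChar K L} (he : e ≠ 1) {f : K[X]}
    (hf : (f.natDegree : K) ≠ 0) : IsEvenPrimitive (asChar e f) f.natDegree where
  map_eq_zero _ hg := asChar_of_eq_zero e f hg
  map_C x hx := by rw [asChar_of_ne_zero e f (by simpa using hx), formalLogDeriv_C]; simp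
  map_eq_one u hu := by
    have hconst : PowerSeries.constantCoeff u = 1 := by
      have := PowerSeries.X_dvd_iff.mp ((dvd_pow_self _ (Nat.succ_ne_zero _)).trans hu)
      rwa [map_sub, map_one, sub_eq_zero] at this
    have hderiv := X_pow_dvd_derivative hu
    rw [map_sub, PowerSeries.derivative_one, sub_zero] at hderiv
    rw [asChar_of_ne_zero e f (by simp [hconst]), formalLogDeriv,
      coeffPairing_eq_zero f (hderiv.mul_right _), neg_zero, AddChar.map_zero_eq_one]
  exists_map_ne_one := exists_asChar_ne_one he hf

lemma asChar_coe_reverse (e : AddChar K L) {f : K[X]} (hf : f.coeff 0 = 0) {F : K[X]}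
    (hF : F.Monic) :
    asChar e f F.reverse =
      e (Algebra.trace K (AdjoinRoot F) (aeval (AdjoinRoot.root F) f)) := by
  have hconst : PowerSeries.constantCoeff (F.reverse : K⟦X⟧) ≠ 0 := by simp [hF]
  rw [asChar_of_ne_zero e f hconst,
    formalLogDeriv_eq_of_derivative_eq_mul hconst (derivative_coe_reverse hF),
    (coeffPairing f).map_neg, neg_neg, coeffPairing_apply, aeval_eq_sum_range,
    Finset.sum_range_succ', hf]
  simp

end ArtinSchreierCharacter

section TruncatedPowerSeries

open scoped PowerSeries

variable {R : Type*} [CommRing R]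

lemma coeff_eq_coeff_of_X_pow_dvd_sub {n : ℕ} {g h : R⟦X⟧}
    (hgh : PowerSeries.X ^ (n + 1) ∣ g - h) :
    PowerSeries.coeff n g = PowerSeries.coeff n h := by
  rw [← sub_eq_zero, ← map_sub]
  exact PowerSeries.X_pow_dvd_iff.mp hgh n n.lt_succ_self

lemma X_pow_dvd_sub_ofFn_coeff (N : ℕ) (g : R⟦X⟧) :
    PowerSeries.X ^ N ∣ g - ((ofFn N fun i ↦ PowerSeries.coeff i g : R[X]) : R⟦X⟧) := by
  rw [PowerSeries.X_pow_dvd_iff]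
  intro i hi
  simp [hi]

lemma X_pow_dvd_ofFn_iff {N : ℕ} {h : Fin N → R} :
    PowerSeries.X ^ N ∣ (ofFn N h : R⟦X⟧) ↔ h = 0 := by
  refine ⟨fun hdvd ↦ funext fun i ↦ ?_, by rintro rfl; simp⟩
  simpa using PowerSeries.X_pow_dvd_iff.mp hdvd i i.2

lemma ofFn_append {m n : ℕ} (h₁ : Fin m → R) (h₂ : Fin n → R) :
    ofFn (m + n) (Fin.append h₁ h₂) = ofFn m h₁ + X ^ m * ofFn n h₂ := by
  simp only [ofFn_eq_sum_monomial, Fin.sum_univ_add, Fin.append_left, Fin.append_right,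
    Finset.mul_sum, X_pow_mul_monomial, Fin.val_castAdd, Fin.val_natAdd, add_comm]

variable [Fintype R]

lemma sum_unit_mul_ofFn {M : Type*} [AddCommMonoid M] {N : ℕ} {u : R⟦X⟧}
    (hu : IsUnit u) {Φ : R⟦X⟧ → M}
    (hΦ : ∀ g h, PowerSeries.X ^ N ∣ g - h → Φ g = Φ h) :
    ∑ h : Fin N → R, Φ (u * ofFn N h) = ∑ h : Fin N → R, Φ (ofFn N h) := by
  let T (h : Fin N → R) (i : Fin N) : R := PowerSeries.coeff i (u * ofFn N h)
  have hT (h) : PowerSeries.X ^ N ∣ u * (ofFn N h : R⟦X⟧) - (ofFn N (T h) : R⟦X⟧) :=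
    X_pow_dvd_sub_ofFn_coeff N _
  have hinj : Function.Injective T := by
    intro h h' heq
    have hdvd := dvd_sub (hT h) (hT h')
    rw [heq, sub_sub_sub_cancel_right, ← mul_sub, ← Polynomial.coe_sub, ← map_sub] at hdvd
    rw [← sub_eq_zero, ← X_pow_dvd_ofFn_iff]
    exact hu.dvd_mul_left.mp hdvd
  calc ∑ h : Fin N → R, Φ (u * ofFn N h) = ∑ h : Fin N → R, Φ (ofFn N (T h)) :=
        Finset.sum_congr rfl fun h _ ↦ hΦ _ _ (hT h)
    _ = ∑ h : Fin N → R, Φ (ofFn N h) :=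
        (Finite.injective_iff_bijective.mp hinj).sum_comp fun h ↦ Φ (ofFn N h)

lemma sum_rescale_neg_one_ofFn {M : Type*} [AddCommMonoid M] (N : ℕ) (Φ : R⟦X⟧ → M) :
    ∑ h : Fin N → R, Φ (PowerSeries.rescale (-1) (ofFn N h)) = ∑ h : Fin N → R, Φ (ofFn N h) := by
  have hinv : Function.Involutive fun (h : Fin N → R) (i : Fin N) ↦ (-1) ^ (i : ℕ) * h i := by
    intro h
    ext i
    beta_reduce
    rw [← mul_assoc, ← mul_pow, neg_one_mul, neg_neg, one_pow, one_mul]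
  refine Fintype.sum_bijective _ hinv.bijective _ _ fun h ↦ congrArg Φ ?_
  ext i
  rw [PowerSeries.coeff_rescale, Polynomial.coeff_coe, Polynomial.coeff_coe]
  by_cases hi : i < N
  · simp [hi]
  · simp [ofFn_coeff_eq_zero_of_ge _ (not_lt.mp hi)]

end TruncatedPowerSeries

section GaussSum

open scoped PowerSeries

variable {K L : Type*} [Field K] [Fintype K] [Field L]

lemma sum_addChar_coeff_mul_ofFn {e : AddChar K L} (he : e ≠ 1) (n : ℕ) (h : Fin (n + 1) → K) :
    ∑ k : Fin (n + 1) → K, e ((ofFn (n + 1) h * ofFn (n + 1) k).coeff n) =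
      if h = 0 then (Fintype.card K : L) ^ (n + 1) else 0 := by
  let φ : AddChar (Fin (n + 1) → K) L := e.compAddMonoidHom
    (lcoeff K n ∘ₗ LinearMap.mulLeft K (ofFn (n + 1) h) ∘ₗ ofFn (n + 1)).toAddMonoidHom
  have hsum := φ.sum_eq_ite
  have hφ : φ = 0 ↔ h = 0 := by
    refine ⟨fun hzero ↦ ?_, fun hzero ↦ ?_⟩
    · by_contra hne
      obtain ⟨i, hi⟩ := Function.ne_iff.mp hne
      obtain ⟨x, hx⟩ := AddChar.ne_one_iff.mp he
      have hmonomial : ofFn (n + 1) (Pi.single i.rev (x / h i)) = monomial i.rev (x / h i) := by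
        rw [ofFn_eq_sum_monomial, Finset.sum_eq_single i.rev] <;> simp +contextual
      have hcoeff : (ofFn (n + 1) h * monomial i.rev (x / h i)).coeff n = x := by
        have hi_le : (i : ℕ) ≤ n := Nat.le_of_lt_succ i.2
        rw [← C_mul_X_pow_eq_monomial, ← mul_assoc, coeff_mul_X_pow', Fin.val_rev,
          if_pos (by lia), coeff_mul_C, show n - (n + 1 - (i + 1)) = i by lia,
          ofFn_coeff_eq_val_of_lt _ i.2]
        exact mul_div_cancel₀ x hi
      have hone : φ (Pi.single i.rev (x / h i)) = 1 := by rw [hzero]; rfl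
      refine hx ?_
      rwa [AddChar.compAddMonoidHom_apply, LinearMap.toAddMonoidHom_coe, LinearMap.comp_apply,
        LinearMap.comp_apply, hmonomial, LinearMap.mulLeft_apply, lcoeff_apply, hcoeff] at hone
    · ext k
      simp [φ, hzero]
  simpa [φ, hφ] using hsum

/-- The sum of `χ` over the residues modulo `X ^ m`, represented by polynomials of degree `< m`. -/
def truncSum (χ : K⟦X⟧ →*₀ L) (m : ℕ) : L := ∑ h : Fin m → K, χ (ofFn m h)

/-- The Gauss sum of a character modulo `X ^ (n + 1)`, where `g ↦ e (coeff n (g * k))` is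
the additive character of `K⟦X⟧ / X ^ (n + 1)` with parameter `k`. -/
def truncGaussSum (χ : K⟦X⟧ →*₀ L) (e : AddChar K L) (n : ℕ) (k : K⟦X⟧) : L :=
  ∑ h : Fin (n + 1) → K, χ (ofFn (n + 1) h) * e (PowerSeries.coeff n (ofFn (n + 1) h * k))

lemma sum_truncGaussSum_ofFn (χ : K⟦X⟧ →*₀ L) {e : AddChar K L} (he : e ≠ 1) (m n : ℕ) :
    ∑ k : Fin (n + 1) → K, truncGaussSum χ e (m + n) (ofFn (n + 1) k) =
      (Fintype.card K : L) ^ (n + 1) * truncSum χ m := by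
  have hcoeff (h₁ : Fin m → K) (h₂ k : Fin (n + 1) → K) :
      ((ofFn m h₁ + X ^ m * ofFn (n + 1) h₂) * ofFn (n + 1) k).coeff (m + n) =
        (ofFn (n + 1) h₂ * ofFn (n + 1) k).coeff n := by
    rw [add_mul, mul_assoc, coeff_add, add_comm m n, coeff_X_pow_mul, add_eq_right, add_comm n m]
    rw [coeff_mul]
    refine Finset.sum_eq_zero fun x hx ↦ ?_
    have hx := Finset.HasAntidiagonal.mem_antidiagonal.mp hx
    rcases lt_or_ge x.1 m with hlt | hge
    · rw [ofFn_coeff_eq_zero_of_ge k (by lia), mul_zero]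
    · rw [ofFn_coeff_eq_zero_of_ge h₁ hge, zero_mul]
  have hsum (h₁ : Fin m → K) :
      ∑ h₂ : Fin (n + 1) → K, χ (ofFn (m + (n + 1)) (Fin.append h₁ h₂)) *
        ∑ k : Fin (n + 1) → K,
          e ((ofFn (m + (n + 1)) (Fin.append h₁ h₂) * ofFn (n + 1) k).coeff (m + n)) =
        (Fintype.card K : L) ^ (n + 1) * χ (ofFn m h₁) := by
    simp only [ofFn_append, hcoeff, sum_addChar_coeff_mul_ofFn he]
    simp [mul_comm]
  simp only [truncGaussSum, truncSum, ← Polynomial.coe_mul, Polynomial.coeff_coe]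
  rw [Finset.sum_comm]
  simp only [← Finset.mul_sum]
  refine ((Fin.appendEquiv m (n + 1)).sum_comp _).symm.trans ?_
  rw [Fintype.sum_prod_type, Finset.mul_sum]
  exact Finset.sum_congr rfl fun h₁ _ ↦ hsum h₁

variable {χ : K⟦X⟧ →*₀ L} {n : ℕ}

lemma IsEvenPrimitive.truncSum_eq_zero (hχ : IsEvenPrimitive χ n) : truncSum χ (n + 1) = 0 := by
  obtain ⟨u, hu, -, hne⟩ := hχ.exists_map_ne_one
  have hu_unit : IsUnit u := PowerSeries.isUnit_iff_constantCoeff.mpr (hu ▸ isUnit_one)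
  have hsum := sum_unit_mul_ofFn hu_unit fun g h ↦ hχ.map_congr (g := g) (h := h)
  simp only [map_mul, ← Finset.mul_sum] at hsum
  exact eq_zero_of_mul_eq_self_left hne hsum

lemma IsEvenPrimitive.mul_truncGaussSum_unit_mul (hχ : IsEvenPrimitive χ n) (e : AddChar K L)
    {u : K⟦X⟧} (hu : IsUnit u) (k : K⟦X⟧) :
    χ u * truncGaussSum χ e n (u * k) = truncGaussSum χ e n k := by
  have hsum := sum_unit_mul_ofFn hu
    (Φ := fun g ↦ χ g * e (PowerSeries.coeff n (g * k))) fun g h hgh ↦ by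
      rw [hχ.map_congr hgh, coeff_eq_coeff_of_X_pow_dvd_sub (sub_mul g h k ▸ hgh.mul_right k)]
  rw [truncGaussSum, truncGaussSum, ← hsum, Finset.mul_sum]
  refine Finset.sum_congr rfl fun h _ ↦ ?_
  rw [map_mul χ, mul_assoc (χ u), mul_assoc u, mul_left_comm u]

lemma IsEvenPrimitive.truncGaussSum_eq (hχ : IsEvenPrimitive χ n) (e : AddChar K L) (k : K⟦X⟧) :
    truncGaussSum χ e n k = (χ k)⁻¹ * truncGaussSum χ e n 1 := by
  by_cases hk : PowerSeries.constantCoeff k = 0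
  · obtain ⟨u, hu, hdvd, hne⟩ := hχ.exists_map_ne_one
    have hmod : PowerSeries.X ^ (n + 1) ∣ u * k - k := by
      rw [← sub_one_mul, pow_succ]
      exact mul_dvd_mul hdvd (PowerSeries.X_dvd_iff.mpr hk)
    have hshift : truncGaussSum χ e n (u * k) = truncGaussSum χ e n k :=
      Finset.sum_congr rfl fun h _ ↦ by
        rw [coeff_eq_coeff_of_X_pow_dvd_sub (mul_sub _ (u * k) k ▸ hmod.mul_left _)]
    have hfix := hχ.mul_truncGaussSum_unit_mul e
      (PowerSeries.isUnit_iff_constantCoeff.mpr (hu ▸ isUnit_one)) k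
    rw [hshift] at hfix
    rw [hχ.map_eq_zero k hk, inv_zero, zero_mul, eq_zero_of_mul_eq_self_left hne hfix]
  · have hk_unit : IsUnit k := PowerSeries.isUnit_iff_constantCoeff.mpr (Ne.isUnit hk)
    rw [← hχ.mul_truncGaussSum_unit_mul e hk_unit 1, mul_one,
      inv_mul_cancel_left₀ (hk_unit.map χ).ne_zero]

lemma IsEvenPrimitive.truncSum_functional_equation {m n : ℕ} (hχ : IsEvenPrimitive χ (m + n))
    (hodd : ∀ g, χ (PowerSeries.rescale (-1) g) = (χ g)⁻¹) {e : AddChar K L} (he : e ≠ 1) :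
    truncGaussSum χ e (m + n) 1 * truncSum χ (n + 1) =
      (Fintype.card K : L) ^ (n + 1) * truncSum χ m := by
  rw [← sum_truncGaussSum_ofFn χ he, truncSum, ← sum_rescale_neg_one_ofFn,
    Finset.mul_sum]
  refine Finset.sum_congr rfl fun h _ ↦ ?_
  rw [hodd, mul_comm, ← hχ.truncGaussSum_eq]

end GaussSum

section Monics

open scoped PowerSeries

section

variable {R : Type*} [CommRing R] {n : ℕ}

lemma ofFn_cons (x : R) (b : Fin n → R) :
    ofFn (n + 1) (Fin.cons x b : Fin (n + 1) → R) = C x + X * ofFn n b := by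
  simp [ofFn_eq_sum_monomial, Fin.sum_univ_succ, Finset.mul_sum, X_mul_monomial]

lemma monic_X_pow_add_ofFn (b : Fin n → R) : (X ^ n + ofFn n b).Monic :=
  monic_X_pow_add (ofFn_degree_lt b)

variable [Nontrivial R]

lemma natDegree_X_pow_add_ofFn (b : Fin n → R) : (X ^ n + ofFn n b).natDegree = n := by
  rw [natDegree_add_eq_left_of_degree_lt (by simpa using ofFn_degree_lt b), natDegree_X_pow]

lemma reverse_X_pow_add_ofFn (b : Fin n → R) :
    (X ^ n + ofFn n b).reverse = 1 + X * ofFn n (b ∘ Fin.rev) := by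
  ext i
  rw [coeff_reverse, natDegree_X_pow_add_ofFn, coeff_add, coeff_X_pow, coeff_add]
  cases i with
  | zero => simp
  | succ i =>
    rw [coeff_one, if_neg i.succ_ne_zero, coeff_X_mul, zero_add]
    by_cases hi : i < n
    · rw [revAt_le hi, if_neg (by lia), zero_add, ofFn_coeff_eq_val_of_lt _ (by lia),
        ofFn_coeff_eq_val_of_lt _ hi]
      rfl
    · rw [revAt_eq_self_of_lt (by lia), if_neg (by lia), zero_add,
        ofFn_coeff_eq_zero_of_ge _ (by lia), ofFn_coeff_eq_zero_of_ge _ (by lia)]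

end

variable {R : Type*} [CommRing R] [Fintype R]

variable (R) in
/-- The finite set `M_n` of monic polynomials of degree `n`. -/
def monics (n : ℕ) : Finset R[X] := Finset.univ.image fun b : Fin n → R ↦ X ^ n + ofFn n b

lemma sum_monics {M : Type*} [AddCommMonoid M] (n : ℕ) (g : R[X] → M) :
    ∑ F ∈ monics R n, g F = ∑ b : Fin n → R, g (X ^ n + ofFn n b) :=
  Finset.sum_image fun _ _ _ _ h ↦ injective_ofFn n (add_left_cancel h)

variable [Nontrivial R]

lemma mem_monics {n : ℕ} {F : R[X]} : F ∈ monics R n ↔ F.Monic ∧ F.natDegree = n := by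
  simp only [monics, Finset.mem_image, Finset.mem_univ, true_and]
  constructor
  · rintro ⟨b, rfl⟩
    exact ⟨monic_X_pow_add_ofFn b, natDegree_X_pow_add_ofFn b⟩
  · rintro ⟨hF, rfl⟩
    refine ⟨fun i ↦ F.coeff i, ?_⟩
    conv_rhs => rw [hF.as_sum]
    rw [ofFn_eq_sum_monomial, Fin.sum_univ_eq_sum_range fun i ↦ monomial i (F.coeff i)]
    simp only [C_mul_X_pow_eq_monomial]

lemma sum_monics_X_mul {M : Type*} [AddCommMonoid M] (n : ℕ) (g : R[X] → M) :
    ∑ F ∈ monics R (n + 1) with F.coeff 0 = 0, g F = ∑ F ∈ monics R n, g (X * F) := by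
  refine (Finset.sum_nbij (X * ·) (fun F hF ↦ ?_) (fun F _ G _ h ↦ isRegular_X.left h)
    (fun F hF ↦ ?_) fun _ _ ↦ rfl).symm
  · obtain ⟨hF, hdeg⟩ := mem_monics.mp hF
    refine Finset.mem_filter.mpr ⟨mem_monics.mpr ⟨monic_X.mul hF, ?_⟩, coeff_X_mul_zero F⟩
    rw [natDegree_X_mul hF.ne_zero, hdeg]
  · obtain ⟨hF, hcoeff⟩ := Finset.mem_filter.mp hF
    obtain ⟨G, rfl⟩ := X_dvd_iff.mpr hcoeff
    obtain ⟨hmonic, hdeg⟩ := mem_monics.mp hF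
    have hG : G.Monic := monic_X.of_mul_monic_left hmonic
    rw [natDegree_X_mul hG.ne_zero] at hdeg
    exact ⟨G, mem_monics.mpr ⟨hG, Nat.succ_injective hdeg⟩, rfl⟩

lemma sum_monics_ite_coeff_zero {M : Type*} [AddCommGroup M] {g : R[X] → M}
    (hg : ∀ F, g (X * F) = g F) (n : ℕ) :
    ∑ F ∈ monics R (n + 1), (if F.coeff 0 ≠ 0 then g F else 0) =
      ∑ F ∈ monics R (n + 1), g F - ∑ F ∈ monics R n, g F := by
  rw [← Finset.sum_filter, eq_sub_iff_add_eq', ← Finset.sum_congr rfl fun F _ ↦ hg F,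
    ← sum_monics_X_mul]
  exact Finset.sum_filter_add_sum_filter_not _ _ _

lemma IsEvenPrimitive.truncSum_succ {K L : Type*} [Field K] [Fintype K] [Field L]
    {χ : K⟦X⟧ →*₀ L} {n : ℕ} (hχ : IsEvenPrimitive χ n) (j : ℕ) :
    truncSum χ (j + 1) = ((Fintype.card K : L) - 1) * ∑ F ∈ monics K j, χ F.reverse := by
  have hzero : ∑ b : Fin j → K, χ (ofFn (j + 1) (Fin.cons 0 b : Fin (j + 1) → K)) = 0 :=
    Finset.sum_eq_zero fun b _ ↦ hχ.map_eq_zero _ (by simp [ofFn_cons])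
  have hunit {x : K} (hx : x ≠ 0) :
      ∑ b : Fin j → K, χ (ofFn (j + 1) (Fin.cons x b : Fin (j + 1) → K)) =
        ∑ F ∈ monics K j, χ F.reverse := by
    rw [sum_monics]
    let scale : (Fin j → K) ≃ (Fin j → K) :=
      (MulAction.toPerm (Units.mk0 x hx)).trans (Fin.revPerm.arrowCongr (Equiv.refl K))
    refine (Fintype.sum_equiv scale _ _ fun b ↦ ?_).symm
    have hscale : scale b = x • (b ∘ Fin.rev) := rfl
    have hmul : C x + X * ofFn j (x • (b ∘ Fin.rev)) = C x * (1 + X * ofFn j (b ∘ Fin.rev)) := by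
      rw [map_smul, smul_eq_C_mul]
      ring
    rw [hscale, reverse_X_pow_add_ofFn, ofFn_cons, hmul, Polynomial.coe_mul, Polynomial.coe_C,
      map_mul, hχ.map_C x hx, one_mul]
  rw [truncSum, ← (Fin.consEquiv fun _ : Fin (j + 1) ↦ K).sum_comp, Fintype.sum_prod_type,
    ← Finset.add_sum_erase _ _ (Finset.mem_univ (0 : K))]
  refine (congrArg₂ _ hzero (Finset.sum_congr rfl fun x hx ↦
    hunit (Finset.ne_of_mem_erase hx))).trans ?_
  rw [zero_add, Finset.sum_const, Finset.card_erase_of_mem (Finset.mem_univ _), Finset.card_univ,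
    nsmul_eq_mul, Nat.cast_pred Fintype.card_pos]

end Monics

section Divisor

variable {K : Type} [Field K] [Fintype K]

variable (K) in
/-- The finite set of pairs of monic polynomials whose product has degree `n`. -/
def monicPairs (n : ℕ) : Finset (K[X] × K[X]) :=
  (Finset.HasAntidiagonal.antidiagonal n).biUnion fun x ↦ monics K x.1 ×ˢ monics K x.2

lemma mem_monicPairs {n : ℕ} {y : K[X] × K[X]} :
    y ∈ monicPairs K n ↔ y.1.Monic ∧ y.2.Monic ∧ y.1 * y.2 ∈ monics K n := by
  simp only [monicPairs, Finset.mem_biUnion, Finset.mem_product, mem_monics,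
    Finset.HasAntidiagonal.mem_antidiagonal]
  constructor
  · rintro ⟨x, hx, ⟨h₁, hdeg₁⟩, h₂, hdeg₂⟩
    exact ⟨h₁, h₂, h₁.mul h₂, by rw [h₁.natDegree_mul h₂, hdeg₁, hdeg₂, hx]⟩
  · rintro ⟨h₁, h₂, -, hdeg⟩
    exact ⟨(y.1.natDegree, y.2.natDegree), h₁.natDegree_mul h₂ ▸ hdeg, ⟨h₁, rfl⟩, h₂, rfl⟩

lemma sum_monicPairs {M : Type*} [AddCommMonoid M] (n : ℕ) (g : K[X] × K[X] → M) :
    ∑ y ∈ monicPairs K n, g y =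
      ∑ x ∈ Finset.HasAntidiagonal.antidiagonal n,
        ∑ F ∈ monics K x.1, ∑ G ∈ monics K x.2, g (F, G) := by
  rw [monicPairs, Finset.sum_biUnion]
  · exact Finset.sum_congr rfl fun x _ ↦ Finset.sum_product ..
  · intro x _ x' _ hne
    refine Finset.disjoint_left.mpr fun y hy hy' ↦ hne ?_
    simp only [Finset.mem_product, mem_monics] at hy hy'
    exact Prod.ext (hy.1.2.symm.trans hy'.1.2) (hy.2.2.symm.trans hy'.2.2)

lemma dk_two {n : ℕ} {F : K[X]} (hF : F ∈ monics K n) :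
    dk 2 F = (monicPairs K n |>.filter fun y ↦ y.1 * y.2 = F).card := by
  rw [dk, ← Nat.card_eq_finsetCard]
  refine Nat.card_congr ((finTwoArrowEquiv K[X]).subtypeEquiv fun t ↦ ?_)
  simp only [Finset.mem_filter, mem_monicPairs, finTwoArrowEquiv_apply, Fin.forall_fin_two,
    Fin.prod_univ_two]
  constructor
  · rintro ⟨⟨h₁, h₂⟩, rfl⟩
    exact ⟨⟨h₁, h₂, hF⟩, rfl⟩
  · rintro ⟨⟨h₁, h₂, -⟩, hmul⟩
    exact ⟨⟨h₁, h₂⟩, hmul⟩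

lemma sum_dk_two_mul {R : Type*} [CommSemiring R] {g : K[X] → R}
    (hg : ∀ F G, F.Monic → G.Monic → g (F * G) = g F * g G) (n : ℕ) :
    ∑ F ∈ monics K n, dk 2 F * g F =
      ∑ x ∈ Finset.HasAntidiagonal.antidiagonal n,
        (∑ F ∈ monics K x.1, g F) * ∑ F ∈ monics K x.2, g F := by
  calc ∑ F ∈ monics K n, dk 2 F * g F
      = ∑ F ∈ monics K n, ∑ y ∈ monicPairs K n with y.1 * y.2 = F, g (y.1 * y.2) := by
        refine Finset.sum_congr rfl fun F hF ↦ ?_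
        rw [dk_two hF, ← nsmul_eq_mul, ← Finset.sum_const]
        exact Finset.sum_congr rfl fun y hy ↦ by rw [(Finset.mem_filter.mp hy).2]
    _ = ∑ y ∈ monicPairs K n, g (y.1 * y.2) :=
        Finset.sum_fiberwise_of_maps_to (fun y hy ↦ (mem_monicPairs.mp hy).2.2) _
    _ = _ := by
        rw [sum_monicPairs]
        refine Finset.sum_congr rfl fun x _ ↦ ?_
        rw [Finset.sum_mul_sum]
        exact Finset.sum_congr rfl fun F hF ↦ Finset.sum_congr rfl fun G hG ↦
          hg F G (mem_monics.mp hF).1 (mem_monics.mp hG).1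

end Divisor

section LPolynomial

open scoped PowerSeries

variable {A : Type*} [CommRing A] [Fintype A]

lemma sum_monics_zero {M : Type*} [AddCommMonoid M] (g : A[X] → M) :
    ∑ F ∈ monics A 0, g F = g 1 := by
  simp [sum_monics]

section

variable {R : Type*} [CommRing R] {g : A[X] → R} {N : ℕ}

/-- The `L`-polynomial `∑ g(F) u ^ deg F`, truncated to monic `F` of degree at most `N`. -/
def lPoly (g : A[X] → R) (N : ℕ) : R[X] :=
  ∑ j ∈ Finset.range (N + 1), monomial j (∑ F ∈ monics A j, g F)

lemma coeff_lPoly (j : ℕ) :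
    (lPoly g N).coeff j = if j ≤ N then ∑ F ∈ monics A j, g F else 0 := by
  simp [lPoly, coeff_monomial]

lemma natDegree_lPoly_le : (lPoly g N).natDegree ≤ N :=
  natDegree_le_iff_coeff_eq_zero.mpr fun j hj ↦ by rw [coeff_lPoly, if_neg hj.not_ge]

lemma eval_lPoly (v : R) :
    (lPoly g N).eval v = ∑ j ∈ Finset.range (N + 1), (∑ F ∈ monics A j, g F) * v ^ j := by
  simp only [lPoly, eval_finsetSum, eval_monomial]

lemma lPoly_ite_coeff_zero [Nontrivial A] (hg : ∀ F, g (X * F) = g F)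
    (htop : ∑ F ∈ monics A (N + 1), g F = 0) :
    lPoly (fun F ↦ if F.coeff 0 ≠ 0 then g F else 0) (N + 1) = (1 - X) * lPoly g N := by
  ext j
  rw [coeff_lPoly, sub_mul, one_mul, coeff_sub, coeff_lPoly]
  cases j with
  | zero => simp [sum_monics_zero]
  | succ j =>
    rw [coeff_X_mul, coeff_lPoly, sum_monics_ite_coeff_zero hg]
    rcases lt_trichotomy j N with hlt | rfl | hgt
    · simp [hlt, hlt.le]
    · simp [htop]
    · simp [hgt.not_ge, hgt.le.not_gt]

end

lemma coeff_lPoly_sq {K : Type} [Field K] [Fintype K] {R : Type*} [CommRing R] {g : K[X] → R}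
    (hg : ∀ F G, F.Monic → G.Monic → g (F * G) = g F * g G) {N n : ℕ} (hn : n ≤ N) :
    (lPoly g N ^ 2).coeff n = ∑ F ∈ monics K n, dk 2 F * g F := by
  rw [sum_dk_two_mul hg, sq, coeff_mul]
  refine Finset.sum_congr rfl fun x hx ↦ ?_
  have hsum := Finset.HasAntidiagonal.mem_antidiagonal.mp hx
  rw [coeff_lPoly, coeff_lPoly, if_pos (by lia), if_pos (by lia)]

lemma card_sub_one_ne_zero (K L : Type*) [Fintype K] [Nontrivial K] [Ring L] [CharZero L] :
    (Fintype.card K : L) - 1 ≠ 0 :=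
  sub_ne_zero.mpr (by exact_mod_cast Fintype.one_lt_card.ne')

variable {K L : Type*} [Field K] [Fintype K] [Field L] {χ : K⟦X⟧ →*₀ L}

lemma sum_monics_zero_reverse (χ : K⟦X⟧ →*₀ L) : ∑ F ∈ monics K 0, χ F.reverse = 1 := by
  rw [sum_monics_zero, ← C_1, reverse_C, C_1, Polynomial.coe_one, map_one]

variable [CharZero L]

lemma IsEvenPrimitive.sum_monics_eq_zero {n : ℕ} (hχ : IsEvenPrimitive χ n) :
    ∑ F ∈ monics K n, χ F.reverse = 0 := by
  have hsum := hχ.truncSum_eq_zero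
  rw [hχ.truncSum_succ] at hsum
  exact (mul_eq_zero.mp hsum).resolve_left (card_sub_one_ne_zero K L)

lemma IsEvenPrimitive.sum_monics_mul_sum_monics {i j : ℕ} (hχ : IsEvenPrimitive χ (i + j + 1))
    (hodd : ∀ g, χ (PowerSeries.rescale (-1) g) = (χ g)⁻¹) {e : AddChar K L} (he : e ≠ 1) :
    (∑ F ∈ monics K (i + j), χ F.reverse) * ∑ F ∈ monics K j, χ F.reverse =
      (Fintype.card K : L) ^ j * ∑ F ∈ monics K i, χ F.reverse := by
  set s : ℕ → L := fun k ↦ ∑ F ∈ monics K k, χ F.reverse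
  have hfe {k l : ℕ} (hkl : k + l = i + j) :
      truncGaussSum χ e (i + j + 1) 1 * s l = (Fintype.card K : L) ^ (l + 1) * s k := by
    have hχ' : IsEvenPrimitive χ (k + 1 + l) := by rwa [add_right_comm, hkl]
    have := hχ'.truncSum_functional_equation hodd he
    rw [hχ.truncSum_succ, hχ.truncSum_succ, add_right_comm, hkl] at this
    exact mul_left_cancel₀ (card_sub_one_ne_zero K L) (by linear_combination this)
  -- The instance `l = 0` evaluates the Gauss sum, as `s 0 = 1`.
  have hs_zero : s 0 = 1 := sum_monics_zero_reverse χ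
  have htau := hfe (add_zero (i + j))
  rw [hs_zero, mul_one, zero_add, pow_one] at htau
  have hcard : (Fintype.card K : L) ≠ 0 := Nat.cast_ne_zero.mpr Fintype.card_ne_zero
  have hij := hfe rfl
  rw [htau, pow_succ'] at hij
  exact mul_left_cancel₀ hcard (by linear_combination hij)

lemma IsEvenPrimitive.reflect_lPoly {N : ℕ} (hχ : IsEvenPrimitive χ (N + 1))
    (hodd : ∀ g, χ (PowerSeries.rescale (-1) g) = (χ g)⁻¹) {e : AddChar K L} (he : e ≠ 1)
    {v : L} (hv : Fintype.card K * v ^ 2 = 1) :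
    ∃ ε : L, ε ^ 2 = 1 ∧
      ((lPoly (fun F : K[X] ↦ χ F.reverse) N).comp (C v * X)).reflect N =
        C ε * (lPoly (fun F : K[X] ↦ χ F.reverse) N).comp (C v * X) := by
  set s : ℕ → L := fun k ↦ ∑ F ∈ monics K k, χ F.reverse
  have hs {i j : ℕ} (hij : i + j = N) : s N * s j = (Fintype.card K : L) ^ j * s i := by
    subst hij
    exact hχ.sum_monics_mul_sum_monics hodd he
  have hpow (j : ℕ) : (Fintype.card K : L) ^ j * v ^ (j + j) = 1 := by
    rw [← two_mul, pow_mul, ← mul_pow, hv, one_pow]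
  have hs_zero : s 0 = 1 := sum_monics_zero_reverse χ
  refine ⟨s N * v ^ N, ?_, ?_⟩
  · linear_combination v ^ (N + N) * hs (zero_add N) + hpow N * s 0 + hs_zero
  · ext j
    rw [coeff_reflect, coeff_C_mul, comp_C_mul_X_coeff, comp_C_mul_X_coeff, coeff_lPoly,
      coeff_lPoly]
    by_cases hj : j ≤ N
    · obtain ⟨i, rfl⟩ := Nat.exists_eq_add_of_le' hj
      rw [revAt_le hj, Nat.add_sub_cancel, if_pos hj, if_pos (Nat.le_add_right i j)]
      linear_combination -v ^ (i + j + j) * hs rfl - hpow j * v ^ i * s i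
    · rw [revAt_eq_self_of_lt (not_le.mp hj), if_neg hj, zero_mul, mul_zero]

end LPolynomial

section SelfReciprocal

variable {R : Type*} [CommRing R]

lemma coeff_one_sub_X_mul (P : R[X]) (n : ℕ) :
    ((1 - X) * P).coeff n = P.coeff n - (X * P).coeff n := by
  rw [sub_mul, one_mul, coeff_sub]

lemma sum_range_coeff_one_sub_X_mul (P : R[X]) (v : R) (N : ℕ) :
    ∑ j ∈ Finset.range N, ((1 - X) * P).coeff j * v ^ j =
      (1 - v) * ∑ j ∈ Finset.range N, P.coeff j * v ^ j + (X * P).coeff N * v ^ N := by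
  induction N with
  | zero => simp
  | succ N ih =>
    rw [Finset.sum_range_succ, Finset.sum_range_succ, ih, coeff_one_sub_X_mul, coeff_X_mul]
    ring

lemma sum_range_coeff_one_sub_X_mul_eq_coeff (P : R[X]) (N : ℕ) :
    ∑ j ∈ Finset.range N, ((1 - X) * P).coeff j = (X * P).coeff N := by
  simpa using sum_range_coeff_one_sub_X_mul P 1 N

lemma sum_range_coeff_one_sub_X_sq_mul (Q : R[X]) (N : ℕ) :
    ∑ j ∈ Finset.range N, ((N : R) - j) * ((1 - X) ^ 2 * Q).coeff j = (X * Q).coeff N := by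
  rw [sq, mul_assoc]
  induction N with
  | zero => simp
  | succ N ih =>
    have hstep : ∑ j ∈ Finset.range N, (((N + 1 : ℕ) : R) - j) * ((1 - X) * ((1 - X) * Q)).coeff j =
        (X * Q).coeff N + (X * ((1 - X) * Q)).coeff N := by
      rw [← ih, ← sum_range_coeff_one_sub_X_mul_eq_coeff, ← Finset.sum_add_distrib]
      exact Finset.sum_congr rfl fun j _ ↦ by push_cast; ring
    rw [Finset.sum_range_succ, hstep, coeff_one_sub_X_mul, coeff_one_sub_X_mul, coeff_X_mul]
    push_cast
    ring

lemma sum_range_two_mul_add_one_of_symm {b : ℕ → R} {N : ℕ}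
    (hb : ∀ n < N, b (2 * N - n) = b n) :
    ∑ n ∈ Finset.range (2 * N + 1), b n = 2 * ∑ n ∈ Finset.range N, b n + b N := by
  have htop : ∑ i ∈ Finset.range N, b (N + (i + 1)) = ∑ n ∈ Finset.range N, b n := by
    rw [← Finset.sum_range_reflect b]
    refine Finset.sum_congr rfl fun i hi ↦ ?_
    have hlt := Finset.mem_range.mp hi
    rw [← hb (N - 1 - i) (by lia)]
    exact congrArg b (by lia)
  rw [two_mul N, add_assoc, Finset.sum_range_add, Finset.sum_range_succ', htop, add_zero]
  ring

lemma coeff_sq_mul_pow_of_reflect {S : R[X]} {N : ℕ} (hdeg : S.natDegree ≤ N) {v ε : R}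
    (hε : ε ^ 2 = 1) (hS : (S.comp (C v * X)).reflect N = C ε * S.comp (C v * X)) {n : ℕ}
    (hn : n ≤ 2 * N) :
    (S ^ 2).coeff (2 * N - n) * v ^ (2 * N - n) = (S ^ 2).coeff n * v ^ n := by
  have hcomp : (S.comp (C v * X)).natDegree ≤ N :=
    natDegree_le_iff_coeff_eq_zero.mpr fun j hj ↦ by
      rw [comp_C_mul_X_coeff, coeff_eq_zero_of_natDegree_lt (hdeg.trans_lt hj), zero_mul]
  have hsq : ((S ^ 2).comp (C v * X)).reflect (2 * N) = (S ^ 2).comp (C v * X) := by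
    rw [sq, mul_comp, two_mul, reflect_mul _ _ hcomp hcomp, hS, mul_mul_mul_comm, ← C_mul, ← sq,
      hε, C_1, one_mul]
  have hcoeff := congrArg (coeff · n) hsq
  simpa only [coeff_reflect, revAt_le hn, comp_C_mul_X_coeff] using hcoeff

lemma eval_one_sub_X_sq_mul_of_symm {F : Type*} [Field F] {Q : F[X]} {N : ℕ}
    (hdeg : Q.natDegree ≤ 2 * N) {v : F} (hv : v ≠ 0)
    (hQ : ∀ n < N, Q.coeff (2 * N - n) * v ^ (2 * N - n) = Q.coeff n * v ^ n) :
    ((1 - X) ^ 2 * Q).eval v =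
      2 * ∑ j ∈ Finset.range N, ((1 - X) ^ 2 * Q).coeff j * v ^ j +
        (1 - v) ^ 2 * (((1 - X) ^ 2 * Q).coeff N * v ^ N) +
        v ^ (N + 1) * ∑ j ∈ Finset.range N,
          (((N : F) + 1 - j) * (v - v⁻¹) - 2) * ((1 - X) ^ 2 * Q).coeff j := by
  set D := (1 - X) * Q
  have hA : (1 - X) ^ 2 * Q = (1 - X) * D := by rw [sq, mul_assoc]
  have heval : Q.eval v = 2 * ∑ n ∈ Finset.range N, Q.coeff n * v ^ n + Q.coeff N * v ^ N := by
    rw [eval_eq_sum_range' (Nat.lt_succ_of_le hdeg), Nat.succ_eq_add_one,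
      sum_range_two_mul_add_one_of_symm hQ]
  have hsum_v : ∑ j ∈ Finset.range N, ((1 - X) ^ 2 * Q).coeff j * v ^ j =
      (1 - v) * ((1 - v) * ∑ j ∈ Finset.range N, Q.coeff j * v ^ j + (X * Q).coeff N * v ^ N) +
        (X * D).coeff N * v ^ N := by
    rw [hA, sum_range_coeff_one_sub_X_mul, sum_range_coeff_one_sub_X_mul]
  have hsum_one : ∑ j ∈ Finset.range N, ((1 - X) ^ 2 * Q).coeff j = (X * D).coeff N :=
    hA ▸ sum_range_coeff_one_sub_X_mul_eq_coeff D N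
  have hlast : ∑ j ∈ Finset.range N,
      (((N : F) + 1 - j) * (v - v⁻¹) - 2) * ((1 - X) ^ 2 * Q).coeff j =
        (v - v⁻¹) * ((X * Q).coeff N + (X * D).coeff N) - 2 * (X * D).coeff N := by
    rw [← sum_range_coeff_one_sub_X_sq_mul, ← hsum_one, ← Finset.sum_add_distrib,
      Finset.mul_sum, Finset.mul_sum, ← Finset.sum_sub_distrib]
    exact Finset.sum_congr rfl fun j _ ↦ by ring
  have hmid : ((1 - X) ^ 2 * Q).coeff N = Q.coeff N - (X * Q).coeff N - (X * D).coeff N := by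
    rw [hA, coeff_one_sub_X_mul, coeff_one_sub_X_mul]
  simp only [eval_mul, eval_pow, eval_sub, eval_one, eval_X]
  rw [heval, hsum_v, hlast, hmid]
  field_simp
  ring

end SelfReciprocal

section ApproximateFunctionalEquation

open scoped PowerSeries

variable {K : Type} [Field K] {L : Type*} [Field L]

/-- The completely multiplicative function `F ↦ χ(F^*)`, where `F^*` is the reverse of `F`, made to
vanish on the multiples of `X`. -/
def coprimeXChar (χ : K⟦X⟧ →*₀ L) (F : K[X]) : L := if F.coeff 0 ≠ 0 then χ F.reverse else 0

lemma coprimeXChar_mul (χ : K⟦X⟧ →*₀ L) (F G : K[X]) :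
    coprimeXChar χ (F * G) = coprimeXChar χ F * coprimeXChar χ G := by
  simp only [coprimeXChar, mul_coeff_zero, reverse_mul_of_domain, Polynomial.coe_mul, map_mul]
  by_cases hF : F.coeff 0 = 0 <;> by_cases hG : G.coeff 0 = 0 <;> simp [hF, hG]

variable [Fintype K] [CharZero L]

theorem IsEvenPrimitive.eval_lPoly_sq {χ : K⟦X⟧ →*₀ L} {N : ℕ} (hχ : IsEvenPrimitive χ (N + 1))
    (hodd : ∀ g, χ (PowerSeries.rescale (-1) g) = (χ g)⁻¹) {e : AddChar K L} (he : e ≠ 1)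
    {v : L} (hv : Fintype.card K * v ^ 2 = 1) :
    (lPoly (coprimeXChar χ) (N + 1)).eval v ^ 2 =
      2 * ∑ j ∈ Finset.range N, (∑ F ∈ monics K j, dk 2 F * coprimeXChar χ F) * v ^ j +
        (1 - v) ^ 2 * ((∑ F ∈ monics K N, dk 2 F * coprimeXChar χ F) * v ^ N) +
        v ^ (N + 1) * ∑ j ∈ Finset.range N, (((N : L) + 1 - j) * (v - v⁻¹) - 2) *
          ∑ F ∈ monics K j, dk 2 F * coprimeXChar χ F := by
  let S : L[X] := lPoly (fun F : K[X] ↦ χ F.reverse) N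
  have hfactor : lPoly (coprimeXChar χ) (N + 1) = (1 - X) * S :=
    lPoly_ite_coeff_zero (fun F ↦ by rw [reverse_X_mul]) hχ.sum_monics_eq_zero
  have hS : S.natDegree ≤ N := natDegree_lPoly_le
  have hv_ne : v ≠ 0 := by
    rintro rfl
    simp at hv
  obtain ⟨ε, hε, hreflect⟩ := hχ.reflect_lPoly hodd he hv
  have hcoeff {j : ℕ} (hj : j ≤ N + 1) :
      ∑ F ∈ monics K j, dk 2 F * coprimeXChar χ F = ((1 - X) ^ 2 * S ^ 2).coeff j := by
    rw [← coeff_lPoly_sq (fun F G _ _ ↦ coprimeXChar_mul χ F G) hj, hfactor, mul_pow]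
  have hsum (Φ : ℕ → L → L) :
      ∑ j ∈ Finset.range N, Φ j (∑ F ∈ monics K j, dk 2 F * coprimeXChar χ F) =
        ∑ j ∈ Finset.range N, Φ j (((1 - X) ^ 2 * S ^ 2).coeff j) :=
    Finset.sum_congr rfl fun j hj ↦ by rw [hcoeff ((Finset.mem_range.mp hj).le.trans N.le_succ)]
  rw [hsum fun j A ↦ A * v ^ j, hsum fun j A ↦ (((N : L) + 1 - j) * (v - v⁻¹) - 2) * A,
    hcoeff N.le_succ, ← eval_pow, hfactor, mul_pow]
  exact eval_one_sub_X_sq_mul_of_symm (natDegree_pow_le_of_le 2 hS) hv_ne fun n hn ↦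
    coeff_sq_mul_pow_of_reflect hS hε hreflect (by lia)

end ApproximateFunctionalEquation

section ArtinSchreierLFunction

lemma mpoly_eq {K : Type} [Field K] {n : ℕ} (b : Fin n → K) : mpoly n b = X ^ n + ofFn n b := by
  simp only [mpoly, ofFn_eq_sum_monomial, C_mul_X_pow_eq_monomial]

lemma cpoly_eq_ofFn {K : Type} [Field K] {m : ℕ} (a : Fin m → K) : cpoly a = ofFn m a := by
  simp only [cpoly, ofFn_eq_sum_monomial, C_mul_X_pow_eq_monomial]

lemma natDegree_cpoly {K : Type} [Field K] {d : ℕ} {a : Fin (d + 1) → K}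
    (ha : a (Fin.last d) ≠ 0) : (cpoly a).natDegree = d := by
  rw [cpoly_eq_ofFn]
  refine natDegree_eq_of_le_of_coeff_ne_zero
    (Nat.lt_succ_iff.mp (ofFn_natDegree_lt d.succ_pos a)) ?_
  rwa [ofFn_coeff_eq_val_of_lt a d.lt_succ_self]

lemma coeff_zero_eq_zero_of_comp_neg_X {R : Type*} [CommRing R] [NoZeroDivisors R]
    (h2 : (2 : R) ≠ 0) {f : R[X]} (hf : f.comp (-X) = -f) : f.coeff 0 = 0 := by
  have := neg_one_pow_mul_coeff_of_comp_neg_X hf 0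
  exact (mul_eq_zero.mp (by linear_combination this : 2 * f.coeff 0 = 0)).resolve_left h2

lemma sum_mpoly {K : Type} [Field K] [Fintype K] {M : Type*} [AddCommMonoid M] (n : ℕ)
    (g : K[X] → M) : ∑ b : Fin n → K, g (mpoly n b) = ∑ F ∈ monics K n, g F := by
  simp only [sum_monics, mpoly_eq]

lemma compAddMonoidHom_trace_ne_one {k K M : Type*} [Field k] [Field K] [Algebra k K]
    [FiniteDimensional k K] [Algebra.IsSeparable k K] [Monoid M] {ψ : AddChar k M} (hψ : ψ ≠ 1) :
    ψ.compAddMonoidHom (Algebra.trace k K).toAddMonoidHom ≠ 1 := by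
  obtain ⟨x, hx⟩ := AddChar.ne_one_iff.mp hψ
  obtain ⟨y, rfl⟩ := Algebra.trace_surjective k K x
  exact AddChar.ne_one_iff.mpr ⟨y, hx⟩

variable {p : ℕ} {K : Type} [Field K] [Fintype K]

lemma chi0_eq_coprimeXChar [Algebra (ZMod p) K] (ψ : AddChar (ZMod p) ℂ) {f F : K[X]}
    (hf : f.coeff 0 = 0) (hF : F.Monic) :
    chi0 p ψ f F =
      coprimeXChar (asChar (ψ.compAddMonoidHom (Algebra.trace (ZMod p) K).toAddMonoidHom) f) F := by
  rw [coprimeXChar, asChar_coe_reverse _ hf hF]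
  rfl

lemma Lchi0_eq_eval_lPoly [Algebra (ZMod p) K] (ψ : AddChar (ZMod p) ℂ) (d : ℕ) {f : K[X]}
    (hf : f.coeff 0 = 0) (u : ℂ) :
    Lchi0 p ψ d f u = (lPoly (coprimeXChar
      (asChar (ψ.compAddMonoidHom (Algebra.trace (ZMod p) K).toAddMonoidHom) f)) d).eval u := by
  rw [Lchi0, eval_lPoly]
  refine Finset.sum_congr rfl fun j _ ↦ ?_
  rw [sum_mpoly]
  congr 1
  exact Finset.sum_congr rfl fun F hF ↦ chi0_eq_coprimeXChar ψ hf (mem_monics.mp hF).1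

lemma sum_dk_mul_chi0 [Algebra (ZMod p) K] (ψ : AddChar (ZMod p) ℂ) {f : K[X]}
    (hf : f.coeff 0 = 0) (n : ℕ) :
    ∑ b : Fin n → K, (dk 2 (mpoly n b) : ℂ) * chi0 p ψ f (mpoly n b) =
      ∑ F ∈ monics K n, dk 2 F * coprimeXChar
        (asChar (ψ.compAddMonoidHom (Algebra.trace (ZMod p) K).toAddMonoidHom) f) F := by
  rw [sum_mpoly n fun F ↦ (dk 2 F : ℂ) * chi0 p ψ f F]
  exact Finset.sum_congr rfl fun F hF ↦ by rw [chi0_eq_coprimeXChar ψ hf (mem_monics.mp hF).1]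

lemma comp_neg_X_of_mem_AS0odd {d : ℕ} {a : Fin (d + 1) → K} (ha : a ∈ AS0odd p d) :
    (cpoly a).comp (-X) = -cpoly a :=
  (Finset.mem_filter.mp ha).2

lemma natDegree_of_mem_AS0odd {d : ℕ} {a : Fin (d + 1) → K} (ha : a ∈ AS0odd p d) :
    (cpoly a).natDegree = d :=
  natDegree_cpoly (Finset.mem_filter.mp (Finset.mem_filter.mp ha).1).2.1

lemma coeff_zero_of_mem_AS0odd [Fact p.Prime] [Algebra (ZMod p) K] (hp : Odd p) {d : ℕ}
    {a : Fin (d + 1) → K} (ha : a ∈ AS0odd p d) : (cpoly a).coeff 0 = 0 := by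
  have : CharP K p := charP_of_injective_algebraMap (algebraMap (ZMod p) K).injective p
  have htwo : (2 : K) ≠ 0 := Ring.two_ne_zero (ringChar.eq K p ▸ hp.ne_two_of_dvd_nat dvd_rfl)
  exact coeff_zero_eq_zero_of_comp_neg_X htwo (comp_neg_X_of_mem_AS0odd ha)

lemma qp_neg (q : ℕ) (x : ℝ) : qp q (-x) = (qp q x)⁻¹ := by
  rw [qp, qp, Real.rpow_neg q.cast_nonneg, Complex.ofReal_inv]

lemma qp_neg_div_two (q n : ℕ) : qp q (-(n : ℝ) / 2) = qp q (-(1 / 2)) ^ n := by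
  rw [qp, qp, ← Complex.ofReal_pow, ← Real.rpow_natCast, ← Real.rpow_mul q.cast_nonneg]
  congr 2
  ring

lemma div_qp_div_two (q n : ℕ) (z : ℂ) : z / qp q ((n : ℝ) / 2) = z * qp q (-(1 / 2)) ^ n := by
  rw [← qp_neg_div_two, neg_div, qp_neg, div_eq_mul_inv]

lemma mul_qp_neg_half_sq {q : ℕ} (hq : q ≠ 0) : (q : ℂ) * qp q (-(1 / 2)) ^ 2 = 1 := by
  rw [← qp_neg_div_two, Nat.cast_two, neg_div, div_self two_ne_zero, qp_neg, qp, Real.rpow_one,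
    Complex.ofReal_natCast, mul_inv_cancel₀ (Nat.cast_ne_zero.mpr hq)]

end ArtinSchreierLFunction

theorem stmt_15_general (p : ℕ) [Fact p.Prime]
    {Fq : Type} [Field Fq] [Fintype Fq] [Algebra (ZMod p) Fq]
    (q : ℕ) (hcard : Fintype.card Fq = q)
    (ψ : AddChar (ZMod p) ℂ) (hψ : ψ ≠ 1)
    (d : ℕ) (hpd : ¬p ∣ d) (f : Fq[X]) (hdeg : f.natDegree = d)
    (hf_zero : f.coeff 0 = 0) (hf_odd : f.comp (-X) = -f) :
    (Lchi0 p ψ d f (qp q (-(1/2)))) ^ 2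
      = 2 * (∑ j ∈ Finset.range (d - 1),
            ∑ b : Fin j → Fq,
              (dk 2 (mpoly j b) : ℂ) * chi0 p ψ f (mpoly j b) /
                qp q ((j : ℝ) / 2))
        + (1 - qp q (-(1/2))) ^ 2 *
            (∑ b : Fin (d - 1) → Fq,
              (dk 2 (mpoly (d - 1) b) : ℂ) * chi0 p ψ f (mpoly (d - 1) b) /
                qp q (((d : ℝ) - 1) / 2))
        + qp q (-(d : ℝ) / 2) *
            (∑ j ∈ Finset.range (d - 1),
              (((d : ℂ) - (j : ℂ)) * (qp q (-(1/2)) - qp q (1/2)) - 2) *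
                ∑ b : Fin j → Fq,
                  (dk 2 (mpoly j b) : ℂ) * chi0 p ψ f (mpoly j b)) := by
  obtain ⟨N, rfl⟩ := Nat.exists_eq_succ_of_ne_zero fun h : d = 0 ↦ hpd (h ▸ dvd_zero p)
  have : CharP Fq p := charP_of_injective_algebraMap (algebraMap (ZMod p) Fq).injective p
  have hψ_trace := compAddMonoidHom_trace_ne_one (K := Fq) hψ
  have hprim := isEvenPrimitive_asChar hψ_trace (f := f) (by rwa [hdeg, Ne, CharP.cast_eq_zero_iff])
  rw [hdeg] at hprim
  have hv : (Fintype.card Fq : ℂ) * qp q (-(1 / 2)) ^ 2 = 1 := by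
    rw [hcard, mul_qp_neg_half_sq (hcard ▸ Fintype.card_ne_zero)]
  have hpred : ((N + 1 : ℕ) : ℝ) - 1 = (N : ℝ) := by push_cast; ring
  simp only [Nat.succ_eq_add_one, Nat.add_sub_cancel, hpred, div_qp_div_two, ← Finset.sum_mul,
    sum_dk_mul_chi0 ψ hf_zero, Lchi0_eq_eval_lPoly ψ _ hf_zero, qp_neg_div_two]
  rw [hprim.eval_lPoly_sq (asChar_rescale_neg_one _ hf_odd) hψ_trace hv, qp_neg, inv_inv,
    Nat.cast_succ]

/-- (Approximate functional equation for the odd family; Lemma `afeodd`.)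
For `d ≥ 1` with `gcd(d,2p) = 1` and `f ∈ AS_d^{0,odd}`,
`L(1/√q,χ_f)² = 2 ∑_{deg F ≤ d−2} d₂(F)χ_f(F)/q^{deg F/2}
  + (1−q^{−1/2})² ∑_{deg F = d−1} d₂(F)χ_f(F)/q^{deg F/2}
  + q^{−d/2} ∑_{j=0}^{d−2} ((d−j)(q^{−1/2}−q^{1/2}) − 2) ∑_{deg F = j} d₂(F)χ_f(F)`. -/
theorem stmt_15 (p : ℕ) [Fact p.Prime] (hodd : Odd p)
    {Fq : Type} [Field Fq] [Fintype Fq] [Algebra (ZMod p) Fq]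
    (q e : ℕ) (he : e ≠ 0) (hq : q = p ^ e) (hcard : Fintype.card Fq = q)
    (ψ : AddChar (ZMod p) ℂ) (hψ : ψ ≠ 1)
    (d : ℕ) (hd : 1 ≤ d) (hgcd : Nat.Coprime d (2 * p))
    (a : Fin (d + 1) → Fq) (ha : a ∈ AS0odd p d (Fq := Fq)) :
    (Lchi0 p ψ d (cpoly a) (qp q (-(1/2)))) ^ 2
      = 2 * (∑ j ∈ Finset.range (d - 1),
            ∑ b : Fin j → Fq,
              (dk 2 (mpoly j b) : ℂ) * chi0 p ψ (cpoly a) (mpoly j b) /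
                qp q ((j : ℝ) / 2))
        + (1 - qp q (-(1/2))) ^ 2 *
            (∑ b : Fin (d - 1) → Fq,
              (dk 2 (mpoly (d - 1) b) : ℂ) * chi0 p ψ (cpoly a) (mpoly (d - 1) b) /
                qp q (((d : ℝ) - 1) / 2))
        + qp q (-(d : ℝ) / 2) *
            (∑ j ∈ Finset.range (d - 1),
              (((d : ℂ) - (j : ℂ)) * (qp q (-(1/2)) - qp q (1/2)) - 2) *
                ∑ b : Fin j → Fq,
                  (dk 2 (mpoly j b) : ℂ) * chi0 p ψ (cpoly a) (mpoly j b)) := by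
  exact stmt_15_general p q hcard ψ hψ d
    (((Fact.out : p.Prime).coprime_iff_not_dvd).mp hgcd.coprime_mul_left_right.symm) (cpoly a)
    (natDegree_of_mem_AS0odd ha) (coeff_zero_of_mem_AS0odd hodd ha) (comp_neg_X_of_mem_AS0odd ha)

end AS
end
end

section
/- Let p be an odd prime, q a power of p, and n ≥ 1 an integer with p ∤ n. Then the number of units g of the ring 𝔽_q[x]/(x^n) satisfying g^p = 1 equals q^{n − 1 − ⌊n/p⌋}. Equivalently, the p-torsion subgroup of (𝔽_q[x]/(x^n))^× has order q^{n − 1 − ⌊n/p⌋}. -/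
/-!
In characteristic `p`, `g ^ p ^ k - 1 = (g - 1) ^ p ^ k`, so counting the units `g` with
`g ^ p ^ k = 1` amounts to counting the elements `h = g - 1` with `h ^ p ^ k = 0`. Modulo `π ^ n`,
with `π` prime, `h ^ m = 0` says that `n ≤ m * v` for the `π`-adic valuation `v` of a lift of `h`,
that is `⌈n / m⌉ ≤ v`. These `h` form the ideal generated by `π ^ ⌈n / m⌉`, whose size is the
quotient of the sizes of `𝔽_q[x]/(π ^ n)` and `𝔽_q[x]/(π ^ ⌈n / m⌉)`. When `p ∤ n`,
`⌈n / p⌉ = ⌊n / p⌋ + 1`.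
-/

open Polynomial

theorem ceilDiv_eq_div_add_one_of_not_dvd {m n : ℕ} (hm : m ≠ 0) (hmn : ¬ m ∣ n) :
    n ⌈/⌉ m = n / m + 1 := by
  obtain ⟨l, rfl⟩ : ∃ l, n = l + 1 :=
    Nat.exists_eq_succ_of_ne_zero fun hn ↦ hmn (hn ▸ dvd_zero m)
  rw [Nat.succ_div_of_not_dvd hmn, Nat.ceilDiv_eq_add_pred_div, add_right_comm,
    Nat.add_sub_cancel, Nat.add_div_right l hm.pos]

theorem ceilDiv_le_self (m n : ℕ) : n ⌈/⌉ m ≤ n := by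
  obtain rfl | hm := m.eq_zero_or_pos
  · simp
  · exact (ceilDiv_le_iff_le_mul hm).2 (Nat.le_mul_of_pos_left n hm)

theorem prime_pow_dvd_pow_iff_ceilDiv {M : Type*} [CommMonoidWithZero M] [IsCancelMulZero M]
    {x : M} (hx : Prime x) {m : ℕ} (hm : m ≠ 0) (n : ℕ) (a : M) :
    x ^ n ∣ a ^ m ↔ x ^ (n ⌈/⌉ m) ∣ a := by
  simp only [pow_dvd_iff_le_emultiplicity, emultiplicity_pow hx]
  cases emultiplicity x a with
  | top => simp [hm]
  | coe v => exact_mod_cast (ceilDiv_le_iff_le_mul hm.pos).symm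

theorem pow_eq_zero_iff_mem_map_span_pow_ceilDiv {A : Type*} [CommRing A] [IsDomain A]
    {x : A} (hx : Prime x) {m : ℕ} (hm : m ≠ 0) (n : ℕ) (h : A ⧸ Ideal.span {x ^ n}) :
    h ^ m = 0 ↔
      h ∈ (Ideal.span {x ^ (n ⌈/⌉ m)}).map (Ideal.Quotient.mk (Ideal.span {x ^ n})) := by
  obtain ⟨a, rfl⟩ := Ideal.Quotient.mk_surjective h
  have hle : Ideal.span {x ^ n} ≤ Ideal.span {x ^ (n ⌈/⌉ m)} :=
    Ideal.span_singleton_le_span_singleton.2 (pow_dvd_pow x (ceilDiv_le_self m n))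
  rw [← map_pow, Ideal.Quotient.eq_zero_iff_mem, Ideal.mem_quotient_iff_mem hle,
    Ideal.mem_span_singleton, Ideal.mem_span_singleton, prime_pow_dvd_pow_iff_ceilDiv hx hm]

section UnitsTorsion

variable (F : Type*) {R : Type*} [Field F] [CommRing R] [Algebra F R] (p k : ℕ) [ExpChar F p]

include F in
theorem add_pow_expChar_pow_of_algebra (a b : R) :
    (a + b) ^ p ^ k = a ^ p ^ k + b ^ p ^ k := by
  cases subsingleton_or_nontrivial R
  · exact Subsingleton.elim _ _
  · have := expChar_of_injective_algebraMap (algebraMap F R).injective p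
    exact add_pow_expChar_pow a b p k

/-- In characteristic `p`, translation by `1` identifies the `p ^ k`-torsion units with the elements
whose `p ^ k`-th power vanishes. The field `F` only serves to express the characteristic in such a
way that the zero ring is allowed. -/
def unitsTorsionEquiv : {g : Rˣ // g ^ p ^ k = 1} ≃ {h : R // h ^ p ^ k = 0} where
  toFun g := ⟨g.1 - 1, by
    have := add_pow_expChar_pow_of_algebra F p k (g.1 - 1 : R) 1
    simpa [← Units.val_pow_eq_pow_val, g.2] using this⟩
  invFun h :=
    have hpow : (h.1 + 1) ^ p ^ k = 1 := by
      rw [add_pow_expChar_pow_of_algebra F p k, h.2, one_pow, zero_add]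
    have hne : p ^ k ≠ 0 := (expChar_pow_pos F p k).ne'
    ⟨Units.ofPowEqOne (h.1 + 1) (p ^ k) hpow hne, Units.pow_ofPowEqOne hpow hne⟩
  left_inv g := Subtype.ext (Units.ext (sub_add_cancel _ _))
  right_inv h := Subtype.ext (add_sub_cancel_right _ _)

end UnitsTorsion

section PolynomialQuotients

variable {F : Type*} [Field F]

theorem card_quotient_span_singleton {f : F[X]} (hf : f ≠ 0) :
    Nat.card (F[X] ⧸ Ideal.span {f}) = Nat.card F ^ f.natDegree := by
  have : Module.Finite F (F[X] ⧸ Ideal.span {f}) := (AdjoinRoot.powerBasis hf).finite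
  rw [Module.natCard_eq_pow_finrank (K := F), finrank_quotient_span_eq_natDegree]

theorem card_map_mk_span_singleton [Finite F] {f g : F[X]} (hf : f ≠ 0) (hgf : g ∣ f) :
    Nat.card ((Ideal.span {g}).map (Ideal.Quotient.mk (Ideal.span {f}))) =
      Nat.card F ^ (f.natDegree - g.natDegree) := by
  have hle : Ideal.span {f} ≤ Ideal.span {g} := Ideal.span_singleton_le_span_singleton.2 hgf
  have hcard := Submodule.card_eq_card_quotient_mul_card
    ((Ideal.span {g}).map (Ideal.Quotient.mk (Ideal.span {f})))
  rw [Nat.card_congr (DoubleQuot.quotQuotEquivQuotOfLE hle).toEquiv,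
    card_quotient_span_singleton hf, card_quotient_span_singleton (ne_zero_of_dvd_ne_zero hf hgf),
    ← pow_sub_mul_pow _ (natDegree_le_of_dvd hgf hf)] at hcard
  exact (Nat.eq_of_mul_eq_mul_right (pow_pos Nat.card_pos _) hcard).symm

theorem stmt_16_general [Finite F] (p : ℕ) [ExpChar F p] {π : F[X]} (hπ : Irreducible π)
    (n k : ℕ) :
    Nat.card {g : (F[X] ⧸ Ideal.span {π ^ n})ˣ // g ^ p ^ k = 1} =
      Nat.card F ^ ((n - n ⌈/⌉ p ^ k) * π.natDegree) := by
  have hpk : p ^ k ≠ 0 := (expChar_pow_pos F p k).ne'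
  rw [Nat.card_congr (unitsTorsionEquiv F p k),
    Nat.card_congr (Equiv.subtypeEquivRight
      (pow_eq_zero_iff_mem_map_span_pow_ceilDiv hπ.prime hpk n)),
    card_map_mk_span_singleton (pow_ne_zero n hπ.ne_zero)
      (pow_dvd_pow π (ceilDiv_le_self _ n)),
    natDegree_pow, natDegree_pow, Nat.sub_mul]

end PolynomialQuotients

/-- Let `p` be an odd prime, `q = p^e`, `𝔽_q` a field with `q` elements,
and `n ≥ 1` with `p ∤ n`.  The number of units `g` of `𝔽_q[x]/(x^n)` with `g^p = 1`
(equivalently, the order of the `p`-torsion subgroup of `(𝔽_q[x]/(x^n))ˣ`) equals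
`q^{n − 1 − ⌊n/p⌋}`. -/
theorem stmt_16 (p : ℕ) [Fact p.Prime] (hodd : Odd p)
    (Fq : Type) [Field Fq] [Fintype Fq]
    (q e : ℕ) (he : e ≠ 0) (hq : q = p ^ e) (hcard : Fintype.card Fq = q)
    (n : ℕ) (hn : 1 ≤ n) (hpn : ¬ p ∣ n) :
    Nat.card {g : (Fq[X] ⧸ Ideal.span {(X : Fq[X]) ^ n})ˣ // g ^ p = 1}
      = q ^ (n - 1 - n / p) := by
  have : CharP Fq p := charP_of_card_eq_prime_pow (hcard.trans hq)
  have hp : p ≠ 0 := (Fact.out : p.Prime).ne_zero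
  simpa [hcard, ceilDiv_eq_div_add_one_of_not_dvd hp hpn, Nat.sub_sub, add_comm 1] using
    stmt_16_general p (irreducible_X (R := Fq)) n 1
end
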